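/- Let 0 < α < |a|. Then for every ψ ∈ ℂ² with ‖ψ‖ = 1, uniformly over integers y with |y/n| ≤ α and writing ξₙ = y/n, one has ⟨Uⁿ(δ₀ ⊗ φ), δ_y ⊗ ψ⟩_{ℓ²} = (1 + (−1)^{n+y}) ω^{−y} √(|b| / (2π n (1 − ξₙ²)√(|a|² − ξₙ²))) · { e^{i n[μ(t(ξₙ)) − ξₙ t(ξₙ)] + πi/4} f_ψ(e^{i t(ξₙ)}) + e^{−i n[μ(t(ξₙ)) − ξₙ t(ξₙ)] − πi/4} g_ψ(e^{−i t(ξₙ)}) + O(1/n) } as n → ∞. -/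

import Mathlib

/-!
In Fourier variables the walk multiplies by a unitary matrix with eigenvalues `e^{±iμ(t)}`, where
`cos μ(t) = |a| cos t`. Expanding in spectral projections writes the amplitude as a sum of two
oscillatory integrals over a period. The shift `t ↦ t + π` sends `e^{iμ}` to `-e^{-iμ}` and
exchanges the projections, so the second integral is `(-1)^{n+y}` times the first: this is the
parity factor, and only `∫ e^{in(μ(t) - ξt)} H(t) dt` with `H = ⟨Πφ, ψ⟩` remains.

Since `1 - |a|² cos² w` avoids the negative axis near the real line, `μ` and `H` extend
holomorphically to a strip `|Im w| < δ`. The phase `μ(t) - ξt` has two stationary points per period,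
`t₀ = t(ξ)` and `π - t₀`, where `μ'' = ±m` with `m = (1 - ξ²)√(|a|² - ξ²)/|b|`. The period interval
is deformed into two segments through these points in the steepest-descent directions `1 + i` and
`1 - i`, joined by horizontal segments above the axis where `μ' > ξ` and below it where `μ' < ξ`.

* On the horizontal segments `|μ' - ξ|` is bounded below, because `μ'` is an increasing function of
  `sin t`; hence the integrand is exponentially small.
* On the tilted segments the integrand is `e^{n(-ms² + O(s³))}` times a smooth factor, and Laplace's
  method gives the Gaussian value with error `O(n^{-3/2})`: the corrections of relative order
  `n^{-1/2}` are odd in `s` and integrate to zero.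

The constants depend only on a lower bound for `cos t₀`, which `|ξ| ≤ α < |a|` provides; this is the
uniformity. Finally `H` is `f_ψ(e^{it₀})` at `t₀` and `g_ψ(e^{-it₀})` at `π - t₀`, and the
directions `1 ± i = √2 e^{±πi/4}` produce the phases `e^{±πi/4}`.
-/

open Filter Topology Asymptotics MeasureTheory

noncomputable section

/-- One step of the (column-decomposition) quantum walk `U` on functions `ℤ → ℂ²`:
`(Uf)(x) = P f(x+1) + Q f(x-1)` with `P = [[a,0],[-conj b,0]]`, `Q = [[0,b],[0,conj a]]`. -/
def qwStep (a b : ℂ) (f : ℤ → ℂ × ℂ) : ℤ → ℂ × ℂ := fun x =>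
  (a * (f (x + 1)).1 + b * (f (x - 1)).2,
   -(starRingEnd ℂ) b * (f (x + 1)).1 + (starRingEnd ℂ) a * (f (x - 1)).2)

/-- `δ₀ ⊗ φ : ℤ → ℂ²`. -/
def qwDelta (φ : ℂ × ℂ) : ℤ → ℂ × ℂ := fun x => if x = 0 then φ else 0

/-- Squared norm of a vector in `ℂ²`. -/
def nsq (u : ℂ × ℂ) : ℝ := ‖u.1‖ ^ 2 + ‖u.2‖ ^ 2

/-- Transition probability `p_n(φ; y) = ‖(Uⁿ(δ₀ ⊗ φ))(y)‖²`. -/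
def qwP (a b : ℂ) (φ : ℂ × ℂ) (n : ℕ) (y : ℤ) : ℝ :=
  nsq (((qwStep a b)^[n] (qwDelta φ)) y)

/-- `λ_A(φ) = |φ₂|² − |φ₁|² + (1/|a|²)(ab conj(φ₁)φ₂ + conj(ab) φ₁ conj(φ₂))` (a real number). -/
def lamA (a b : ℂ) (φ : ℂ × ℂ) : ℝ :=
  ‖φ.2‖ ^ 2 - ‖φ.1‖ ^ 2 +
    (a * b * (starRingEnd ℂ) φ.1 * φ.2 +
      (starRingEnd ℂ) a * (starRingEnd ℂ) b * φ.1 * (starRingEnd ℂ) φ.2).re / ‖a‖ ^ 2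

/-- `μ(t) = arccos(|a| cos t)`. -/
def muF (a : ℂ) (t : ℝ) : ℝ := Real.arccos (‖a‖ * Real.cos t)

/-- `t(η) = arcsin(|b|η/(|a|√(1 − η²)))`. -/
def tF (a b : ℂ) (η : ℝ) : ℝ := Real.arcsin (‖b‖ * η / (‖a‖ * Real.sqrt (1 - η ^ 2)))

/-- `θ(η) = 2μ(t(η)) − 2η t(η)`. -/
def thetaF (a b : ℂ) (η : ℝ) : ℝ := 2 * muF a (tF a b η) - 2 * η * tF a b η

/-- The standard inner product on `ℂ²`, conjugate-linear in the second argument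
(the convention of the paper): `⟨u, v⟩ = u₁ conj(v₁) + u₂ conj(v₂)`. -/
def innC (u v : ℂ × ℂ) : ℂ :=
  u.1 * (starRingEnd ℂ) v.1 + u.2 * (starRingEnd ℂ) v.2

/-- `φ̃(z) = (z + z⁻¹)/2`; on the unit circle this is real (`= Re z`). -/
def phit (z : ℂ) : ℝ := ((z + z⁻¹) / 2).re

/-- The eigenvalue `λ(z) = |a|φ̃(z) + i√(1 − |a|²φ̃(z)²)` of `A(ωz)`, for `z ∈ S¹`. -/
def lamS (a : ℂ) (z : ℂ) : ℂ :=
  ((‖a‖ * phit z : ℝ) : ℂ) +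
    Complex.I * ((Real.sqrt (1 - ‖a‖ ^ 2 * phit z ^ 2) : ℝ) : ℂ)

/-- The normalizing factor `p(z) = √(|b|² + |λ(z) − |a| conj z|²)`. -/
def pnormF (a b : ℂ) (z : ℂ) : ℝ :=
  Real.sqrt (‖b‖ ^ 2 + ‖lamS a z - (‖a‖ : ℂ) * (starRingEnd ℂ) z‖ ^ 2)

/-- The unit eigenvector `u(z) = (1/p(z)) ((ab/|a|)z, λ(z) − |a| conj z)ᵀ` of `A(ωz)`. -/
def uvec (a b : ℂ) (z : ℂ) : ℂ × ℂ :=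
  (((pnormF a b z : ℝ) : ℂ)⁻¹ * (a * b / (‖a‖ : ℂ) * z),
   ((pnormF a b z : ℝ) : ℂ)⁻¹ * (lamS a z - (‖a‖ : ℂ) * (starRingEnd ℂ) z))

/-- `Jψ = (−conj ψ₂, conj ψ₁)ᵀ`. -/
def Jmap (ψ : ℂ × ℂ) : ℂ × ℂ := (-(starRingEnd ℂ) ψ.2, (starRingEnd ℂ) ψ.1)

/-- `f_ψ(z) = ⟨φ, u(z)⟩⟨u(z), ψ⟩`. -/
def fpsi (a b : ℂ) (φ ψ : ℂ × ℂ) (z : ℂ) : ℂ :=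
  innC φ (uvec a b z) * innC (uvec a b z) ψ

/-- `g_ψ(z) = ⟨φ, Ju(z)⟩⟨Ju(z), ψ⟩`. -/
def gpsi (a b : ℂ) (φ ψ : ℂ × ℂ) (z : ℂ) : ℂ :=
  innC φ (Jmap (uvec a b z)) * innC (Jmap (uvec a b z)) ψ

section

open Set Metric
open Complex (I)
open scoped Real ComplexConjugate

/-! ### Holomorphic Taylor remainders -/

theorem dslope_iterate_self {f : ℂ → ℂ} {c : ℂ} (hf : AnalyticAt ℂ f c) (n : ℕ) :
    (Function.swap dslope c)^[n] f c = iteratedDeriv n f c / n.factorial := by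
  have hp := hf.hasFPowerSeriesAt
  rw [← (hp.has_fpower_series_iterate_dslope_fslope n).coeff_zero 1,
    ← FormalMultilinearSeries.coeff, FormalMultilinearSeries.coeff_iterate_fslope, zero_add,
    FormalMultilinearSeries.coeff_ofScalars]

theorem eq_taylor_add_pow_mul_dslope_iterate {f : ℂ → ℂ} {c : ℂ} (hf : AnalyticAt ℂ f c)
    (n : ℕ) (w : ℂ) :
    f w = ∑ k ∈ Finset.range n, iteratedDeriv k f c / k.factorial * (w - c) ^ k +
      (w - c) ^ n * (Function.swap dslope c)^[n] f w := by
  induction n with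
  | zero => simp
  | succ n ih =>
    rw [ih, Finset.sum_range_succ, Function.iterate_succ_apply', add_assoc]
    congr 1
    have hslope := sub_smul_dslope ((Function.swap dslope c)^[n] f) c w
    rw [smul_eq_mul, dslope_iterate_self hf] at hslope
    change _ = _ + (w - c) ^ (n + 1) * dslope ((Function.swap dslope c)^[n] f) c w
    rw [pow_succ, mul_assoc, hslope]
    ring

theorem differentiableOn_dslope_iterate {f : ℂ → ℂ} {c : ℂ} {s : Set ℂ} (hs : s ∈ 𝓝 c)
    (hf : DifferentiableOn ℂ f s) (n : ℕ) :
    DifferentiableOn ℂ ((Function.swap dslope c)^[n] f) s := by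
  induction n with
  | zero => exact hf
  | succ n ih =>
    rw [Function.iterate_succ']
    exact (Complex.differentiableOn_dslope hs).2 ih

theorem norm_dslope_iterate_le {f : ℂ → ℂ} {c : ℂ} {R B : ℝ}
    (hf : DifferentiableOn ℂ f (ball c R)) (hB : ∀ w ∈ ball c R, ‖f w‖ ≤ B) (n : ℕ) :
    ∀ w ∈ ball c R, ‖(Function.swap dslope c)^[n] f w‖ ≤ (2 / R) ^ n * B := by
  induction n with
  | zero => simpa using hB
  | succ n ih =>
    intro w hw
    have hR : 0 < R := pos_of_mem_ball hw
    have hmaps : MapsTo ((Function.swap dslope c)^[n] f) (ball c R)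
        (closedBall ((Function.swap dslope c)^[n] f c) (2 * ((2 / R) ^ n * B))) := fun z hz => by
      rw [mem_closedBall, dist_eq_norm, two_mul]
      exact (norm_sub_le _ _).trans (add_le_add (ih z hz) (ih c (mem_ball_self hR)))
    rw [Function.iterate_succ_apply']
    refine (Complex.norm_dslope_le_div_of_mapsTo_ball
      (differentiableOn_dslope_iterate (ball_mem_nhds c hR) hf n) hmaps hw).trans_eq ?_
    ring

theorem exists_taylor_remainder {f : ℂ → ℂ} {c : ℂ} {R B : ℝ} (hR : 0 < R)
    (hf : DifferentiableOn ℂ f (ball c R)) (hB : ∀ w ∈ ball c R, ‖f w‖ ≤ B) (n : ℕ) :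
    ∃ g : ℂ → ℂ, DifferentiableOn ℂ g (ball c R) ∧
      (∀ w, f w = ∑ k ∈ Finset.range n, iteratedDeriv k f c / k.factorial * (w - c) ^ k +
        (w - c) ^ n * g w) ∧
      ∀ w ∈ ball c R, ‖g w‖ ≤ (2 / R) ^ n * B :=
  have hc := ball_mem_nhds c hR
  ⟨_, differentiableOn_dslope_iterate hc hf n,
    eq_taylor_add_pow_mul_dslope_iterate (hf.analyticAt hc) n, norm_dslope_iterate_le hf hB n⟩

theorem exists_taylor_remainder_three {f f' : ℂ → ℂ} {f'' c : ℂ} {R B : ℝ} (hR : 0 < R)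
    (hf : ∀ w ∈ ball c R, HasDerivAt f (f' w) w) (hf' : HasDerivAt f' f'' c)
    (hB : ∀ w ∈ ball c R, ‖f w‖ ≤ B) :
    ∃ g : ℂ → ℂ, DifferentiableOn ℂ g (ball c R) ∧
      (∀ w, f w = f c + f' c * (w - c) + f'' / 2 * (w - c) ^ 2 + (w - c) ^ 3 * g w) ∧
      ∀ w ∈ ball c R, ‖g w‖ ≤ (2 / R) ^ 3 * B := by
  have hderiv : deriv f =ᶠ[𝓝 c] f' :=
    eventually_of_mem (ball_mem_nhds c hR) fun w hw => (hf w hw).deriv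
  have hderiv₂ : iteratedDeriv 2 f c = f'' := by
    rw [iteratedDeriv_succ, iteratedDeriv_one, hderiv.deriv_eq, hf'.deriv]
  obtain ⟨g, hg, hfg, hgB⟩ := exists_taylor_remainder hR
    (fun w hw => (hf w hw).differentiableAt.differentiableWithinAt) hB 3
  refine ⟨g, hg, fun w => ?_, hgB⟩
  rw [hfg w]
  simp [Finset.sum_range_succ, hderiv₂, hderiv.eq_of_nhds]

/-! ### Contour deformation for periodic functions -/

theorem primitive_add_period_sub_eq {U : Set ℂ} (hU : IsOpen U) (hUc : IsPreconnected U)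
    {F G : ℂ → ℂ} {T : ℂ} (hUT : ∀ z ∈ U, z + T ∈ U) (hG : ∀ z ∈ U, HasDerivAt G (F z) z)
    (hF : Function.Periodic F T) {z w : ℂ} (hz : z ∈ U) (hw : w ∈ U) :
    G (z + T) - G z = G (w + T) - G w := by
  have hderiv : ∀ z ∈ U, HasDerivAt (fun z => G (z + T) - G z) 0 z := fun z hz =>
    (((hG _ (hUT z hz)).comp_add_const z T).sub (hG z hz)).congr_deriv (by rw [hF, sub_self])
  exact hU.is_const_of_deriv_eq_zero hUc (f := fun z => G (z + T) - G z)
    (fun z hz => (hderiv z hz).differentiableAt.differentiableWithinAt)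
    (fun z hz => (hderiv z hz).deriv) hz hw

theorem mul_integral_segment_eq_sub {U : Set ℂ} {F G : ℂ → ℂ} (hF : ContinuousOn F U)
    (hG : ∀ z ∈ U, HasDerivAt G (F z) z) {c d : ℂ} {p q : ℝ}
    (hmem : ∀ s ∈ uIcc p q, c + d * s ∈ U) :
    d * ∫ s in p..q, F (c + d * s) = G (c + d * q) - G (c + d * p) := by
  rw [← intervalIntegral.integral_const_mul]
  refine intervalIntegral.integral_eq_sub_of_hasDerivAt (f := fun s : ℝ => G (c + d * s))
    (fun s hs => ?_)
    (continuousOn_const.mul (hF.comp (by fun_prop) hmem)).intervalIntegrable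
  have hline : HasDerivAt (fun s : ℝ => c + d * (s : ℂ)) d s := by
    simpa using ((Complex.ofRealCLM.hasDerivAt (x := s)).const_mul d).const_add c
  exact ((hG _ (hmem s hs)).comp (𝕜 := ℝ) (𝕜' := ℂ) s hline).congr_deriv (mul_comm _ _)

/-- The open strip `|Im z| < δ` about the real axis, in which the eigenvalues and the spectral
projections of the walk continue holomorphically. -/
def horizontalStrip (δ : ℝ) : Set ℂ := Complex.im ⁻¹' Ioo (-δ) δ

theorem mem_horizontalStrip {δ : ℝ} {z : ℂ} : z ∈ horizontalStrip δ ↔ |z.im| < δ :=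
  abs_lt.symm

theorem ofReal_mem_horizontalStrip {δ : ℝ} (hδ : 0 < δ) (t : ℝ) : (t : ℂ) ∈ horizontalStrip δ :=
  mem_horizontalStrip.2 (by simpa)

theorem add_ofReal_mem_horizontalStrip {δ : ℝ} {z : ℂ} (hz : z ∈ horizontalStrip δ) (t : ℝ) :
    z + t ∈ horizontalStrip δ := by
  simpa [mem_horizontalStrip] using hz

theorem isOpen_horizontalStrip (δ : ℝ) : IsOpen (horizontalStrip δ) :=
  isOpen_Ioo.preimage Complex.continuous_im

theorem convex_horizontalStrip (δ : ℝ) : Convex ℝ (horizontalStrip δ) :=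
  (convex_Ioo (-δ) δ).linear_preimage Complex.imLm

/-- The polygon crosses the axis at `t₀` in the direction `1 + i`, runs at height `ρ`, crosses back
at `π - t₀` in the direction `1 - i`, and runs at height `-ρ` up to the translate of its starting
point by `2π`. -/
theorem integral_eq_integral_polygon {δ ρ : ℝ} (hρ : 0 ≤ ρ) (hρδ : ρ < δ) (t₀ : ℝ) {F : ℂ → ℂ}
    (hF : DifferentiableOn ℂ F (horizontalStrip δ)) (hper : Function.Periodic F (2 * π)) :
    ∫ t in (-π)..π, F t =
      (1 + I) * (∫ s in (-ρ)..ρ, F (t₀ + (1 + I) * s)) +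
      (∫ t in (t₀ + ρ)..(π - t₀ - ρ), F (ρ * I + t)) +
      (1 - I) * (∫ s in (-ρ)..ρ, F ((π - t₀ : ℝ) + (1 - I) * s)) +
      ∫ t in (π - t₀ + ρ)..(2 * π + t₀ - ρ), F (-ρ * I + t) := by
  have hδ : 0 < δ := hρ.trans_lt hρδ
  obtain ⟨G, hG'⟩ := (convex_horizontalStrip δ).exists_forall_hasDerivWithinAt hF
  have hG : ∀ z ∈ horizontalStrip δ, HasDerivAt G (F z) z := fun z hz =>
    (hG' z hz).hasDerivAt ((isOpen_horizontalStrip δ).mem_nhds hz)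
  have segment {c d : ℂ} {p q : ℝ} := mul_integral_segment_eq_sub (c := c) (d := d) (p := p)
    (q := q) hF.continuousOn hG
  have hmem : ∀ s ∈ uIcc (-ρ) ρ, |s| < δ := fun s hs => by
    rw [uIcc_of_le (by linarith)] at hs
    exact (abs_le.2 hs).trans_lt hρδ
  have base : 1 * ∫ s in (-π)..π, F (0 + 1 * s) = _ :=
    segment fun s _ => by simpa using ofReal_mem_horizontalStrip hδ s
  have up := segment (c := t₀) (d := 1 + I) (p := -ρ) (q := ρ) fun s hs => by
    simpa [mem_horizontalStrip] using hmem s hs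
  have top := segment (c := ρ * I) (d := 1) (p := t₀ + ρ) (q := π - t₀ - ρ) fun s _ => by
    simpa [mem_horizontalStrip, abs_of_nonneg hρ] using hρδ
  have down := segment (c := (π - t₀ : ℝ)) (d := 1 - I) (p := -ρ) (q := ρ) fun s hs => by
    simpa [mem_horizontalStrip] using hmem s hs
  have bottom := segment (c := -ρ * I) (d := 1) (p := π - t₀ + ρ) (q := 2 * π + t₀ - ρ)
    fun s _ => by simpa [mem_horizontalStrip, abs_of_nonneg hρ] using hρδ
  have period := primitive_add_period_sub_eq (isOpen_horizontalStrip δ)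
    (convex_horizontalStrip δ).isPreconnected (T := 2 * π)
    (fun z hz => by simpa using add_ofReal_mem_horizontalStrip hz (2 * π)) hG hper
    (ofReal_mem_horizontalStrip hδ (-π))
    (show (t₀ + (1 + I) * (-ρ : ℝ) : ℂ) ∈ horizontalStrip δ by
      simpa [mem_horizontalStrip, abs_of_nonneg hρ] using hρδ)
  simp only [zero_add, one_mul] at base up top down bottom
  rw [base, up, top, down, bottom]
  have top_right : (ρ * I + (π - t₀ - ρ : ℝ) : ℂ) = (π - t₀ : ℝ) + (1 - I) * (-ρ : ℝ) := by
    push_cast; ring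
  have top_left : (ρ * I + (t₀ + ρ : ℝ) : ℂ) = t₀ + (1 + I) * ρ := by push_cast; ring
  have bottom_left : (-ρ * I + (π - t₀ + ρ : ℝ) : ℂ) = (π - t₀ : ℝ) + (1 - I) * ρ := by
    push_cast; ring
  have bottom_right : (-ρ * I + (2 * π + t₀ - ρ : ℝ) : ℂ) = t₀ + (1 + I) * (-ρ : ℝ) + 2 * π := by
    push_cast; ring
  have right_end : ((-π : ℝ) + 2 * π : ℂ) = π := by push_cast; ring
  rw [right_end] at period
  rw [top_right, top_left, bottom_left, bottom_right]
  linear_combination period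

/-! ### Laplace's method with a uniform remainder -/

theorem pow_le_factorial_div_mul_exp {a x : ℝ} (ha : 0 < a) (hx : 0 ≤ x) (k : ℕ) :
    x ^ k ≤ k.factorial / a ^ k * Real.exp (a * x) := by
  have h := Real.pow_div_factorial_le_exp (a * x) (by positivity) k
  rw [div_le_iff₀ (by positivity), mul_pow] at h
  rw [div_mul_eq_mul_div, le_div_iff₀ (by positivity)]
  linarith

theorem norm_exp_mul_sub_add_le (w h l q : ℂ) :
    ‖Complex.exp w * h - (l + q)‖ ≤
      ‖w‖ ^ 2 * Real.exp ‖w‖ * ‖h‖ + ‖h - l‖ + ‖w * h - q‖ := by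
  have hexp : ‖Complex.exp w - 1 - w‖ ≤ ‖w‖ ^ 2 * Real.exp ‖w‖ := by
    simpa [Finset.sum_range_succ, sub_sub] using Complex.norm_exp_sub_sum_le_norm_mul_exp w 2
  calc ‖Complex.exp w * h - (l + q)‖
      = ‖(Complex.exp w - 1 - w) * h + (h - l) + (w * h - q)‖ := by ring_nf
    _ ≤ ‖(Complex.exp w - 1 - w) * h‖ + ‖h - l‖ + ‖w * h - q‖ := norm_add₃_le
    _ ≤ _ := by rw [norm_mul]; gcongr

theorem norm_exp_cubic_mul_sub_le {a G K N s : ℝ} (hN : 0 ≤ N) (hs : G * |s| ≤ a)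
    {g h k₀ l : ℂ} (hg : ‖g‖ ≤ G) (hh : ‖h‖ ≤ K) (hl : ‖h - l‖ ≤ K * s ^ 2)
    (hk : ‖g * h - k₀‖ ≤ K * |s|) :
    ‖Complex.exp (N * (s ^ 3 * g)) * h - (l + N * s ^ 3 * k₀)‖ ≤
      s ^ 2 * (G ^ 2 * K * (N * s ^ 2) ^ 2 + K * (N * s ^ 2) + K) *
        Real.exp (a * (N * s ^ 2)) := by
  have hG : 0 ≤ G := (norm_nonneg g).trans hg
  have hK : 0 ≤ K := (norm_nonneg h).trans hh
  have ha : 0 ≤ a := (by positivity : 0 ≤ G * |s|).trans hs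
  set x := N * s ^ 2 with hx
  have : 0 ≤ x := by positivity
  have hcubic : ‖(N * s ^ 3 : ℂ)‖ = x * |s| := by
    rw [norm_mul, norm_pow, Complex.norm_real, Complex.norm_real, Real.norm_eq_abs,
      Real.norm_eq_abs, abs_of_nonneg hN, hx, ← sq_abs s]
    ring
  have hw : ‖(N * (s ^ 3 * g) : ℂ)‖ ≤ x * (G * |s|) := by
    rw [← mul_assoc, norm_mul, hcubic, mul_assoc, mul_comm G]
    gcongr
  have hwexp : Real.exp ‖(N * (s ^ 3 * g) : ℂ)‖ ≤ Real.exp (a * x) := by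
    rw [mul_comm a]
    exact Real.exp_le_exp.2 (hw.trans (by gcongr))
  have hone : 1 ≤ Real.exp (a * x) := Real.one_le_exp (by positivity)
  have hquad : ‖(N * (s ^ 3 * g) : ℂ)‖ ^ 2 * Real.exp ‖(N * (s ^ 3 * g) : ℂ)‖ * ‖h‖ ≤
      (x * (G * |s|)) ^ 2 * Real.exp (a * x) * K := by gcongr
  have hlin : ‖N * (s ^ 3 * g) * h - N * s ^ 3 * k₀‖ ≤ x * |s| * (K * |s|) := by
    rw [show N * (s ^ 3 * g) * h - N * s ^ 3 * k₀ = N * s ^ 3 * (g * h - k₀) by ring, norm_mul,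
      hcubic]
    gcongr
  calc _ ≤ (x * (G * |s|)) ^ 2 * Real.exp (a * x) * K + K * s ^ 2 + x * |s| * (K * |s|) :=
        (norm_exp_mul_sub_add_le _ _ _ _).trans (add_le_add (add_le_add hquad hl) hlin)
    _ = |s| ^ 2 * (G ^ 2 * K * x ^ 2) * Real.exp (a * x) + |s| ^ 2 * (K * x + K) * 1 := by
        rw [← sq_abs s]; ring
    _ ≤ |s| ^ 2 * (G ^ 2 * K * x ^ 2) * Real.exp (a * x) +
        |s| ^ 2 * (K * x + K) * Real.exp (a * x) := by gcongr
    _ = _ := by rw [sq_abs]; ring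

theorem sq_mul_quadratic_mul_exp_le {b G K N : ℝ} (hb : 0 < b) (hK : 0 ≤ K) (hN : 0 < N) (s : ℝ) :
    s ^ 2 * (G ^ 2 * K * (N * s ^ 2) ^ 2 + K * (N * s ^ 2) + K) ≤
      (6 * G ^ 2 * K / b ^ 3 + 2 * K / b ^ 2 + K / b) / N * Real.exp (b * (N * s ^ 2)) := by
  set x := N * s ^ 2 with hx
  have hx0 : 0 ≤ x := by positivity
  have hpow := pow_le_factorial_div_mul_exp hb hx0
  calc s ^ 2 * (G ^ 2 * K * x ^ 2 + K * x + K)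
      = (G ^ 2 * K * x ^ 3 + K * x ^ 2 + K * x ^ 1) / N := by
        rw [show s ^ 2 = x / N by rw [hx]; field_simp]; ring
    _ ≤ (G ^ 2 * K * (Nat.factorial 3 / b ^ 3 * Real.exp (b * x)) +
          K * (Nat.factorial 2 / b ^ 2 * Real.exp (b * x)) +
          K * (Nat.factorial 1 / b ^ 1 * Real.exp (b * x))) / N := by
        gcongr <;> exact hpow _
    _ = _ := by simp only [Nat.factorial]; push_cast; ring

theorem abs_integral_gaussian_sub_le {b ρ : ℝ} (hb : 0 < b) (hρ : 0 ≤ ρ) :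
    |(∫ s in (-ρ)..ρ, Real.exp (-b * s ^ 2)) - √(π / b)| ≤
      Real.exp (-(b / 2) * ρ ^ 2) * √(π / (b / 2)) := by
  have hint := integrable_exp_neg_mul_sq hb
  have hint_half := (integrable_exp_neg_mul_sq (half_pos hb)).const_mul
    (Real.exp (-(b / 2) * ρ ^ 2))
  rw [← integral_gaussian, ← integral_gaussian,
    ← integral_add_compl (measurableSet_Ioc (a := -ρ) (b := ρ)) hint,
    intervalIntegral.integral_of_le (by linarith), sub_add_cancel_left, abs_neg,
    abs_of_nonneg (integral_nonneg fun _ => (Real.exp_pos _).le), ← integral_const_mul]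
  have htail : ∀ s ∈ (Ioc (-ρ) ρ)ᶜ,
      Real.exp (-b * s ^ 2) ≤ Real.exp (-(b / 2) * ρ ^ 2) * Real.exp (-(b / 2) * s ^ 2) := by
    intro s hs
    have hs' : ρ ^ 2 ≤ s ^ 2 := by
      by_contra! h
      obtain ⟨h₁, h₂⟩ := abs_lt.1 (abs_lt_of_sq_lt_sq h hρ)
      exact hs ⟨h₁, h₂.le⟩
    rw [← Real.exp_add, Real.exp_le_exp]
    nlinarith
  exact (setIntegral_mono_on hint.integrableOn hint_half.integrableOn measurableSet_Ioc.compl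
    htail).trans (setIntegral_le_integral hint_half (Eventually.of_forall fun s => by positivity))

theorem integral_gaussian_mul_odd_eq_zero (b ρ : ℝ) (p q : ℂ) :
    ∫ s in (-ρ)..ρ, (Real.exp (-b * s ^ 2) : ℂ) * (p * s + q * s ^ 3) = 0 := by
  set O : ℝ → ℂ := fun s => (Real.exp (-b * s ^ 2) : ℂ) * (p * s + q * s ^ 3) with hO
  have hodd : ∀ s, O (-s) = -O s := fun s => by
    simp only [hO]
    push_cast
    rw [neg_sq]
    ring
  have hreflect : ∫ s in (-ρ)..ρ, O (-s) = ∫ s in (-ρ)..ρ, O s := by simp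
  simp only [hodd, intervalIntegral.integral_neg] at hreflect
  exact self_eq_neg.1 hreflect.symm

theorem norm_exp_neg_sq_add_cubic_mul_sub_le {m₀ m G K N s : ℝ} (hm₀ : 0 < m₀) (hm : m₀ ≤ m)
    (hN : 0 < N) (hs : G * |s| ≤ m₀ / 2) {g h k₀ l : ℂ} (hg : ‖g‖ ≤ G) (hh : ‖h‖ ≤ K)
    (hl : ‖h - l‖ ≤ K * s ^ 2) (hk : ‖g * h - k₀‖ ≤ K * |s|) :
    ‖Complex.exp (N * (-m * s ^ 2 + s ^ 3 * g)) * h -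
        (Real.exp (-(N * m) * s ^ 2) : ℝ) * (l + N * s ^ 3 * k₀)‖ ≤
      (6 * G ^ 2 * K / (m₀ / 4) ^ 3 + 2 * K / (m₀ / 4) ^ 2 + K / (m₀ / 4)) / N *
        Real.exp (-(m₀ / 4 * N) * s ^ 2) := by
  have hK : 0 ≤ K := (norm_nonneg h).trans hh
  set A := 6 * G ^ 2 * K / (m₀ / 4) ^ 3 + 2 * K / (m₀ / 4) ^ 2 + K / (m₀ / 4)
  have hfactor : Complex.exp (N * (-m * s ^ 2 + s ^ 3 * g)) =
      (Real.exp (-(N * m) * s ^ 2) : ℝ) * Complex.exp (N * (s ^ 3 * g)) := by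
    rw [Complex.ofReal_exp, ← Complex.exp_add]
    push_cast
    ring_nf
  have hrate : Real.exp (-(N * m) * s ^ 2) ≤ Real.exp (-(N * m₀) * s ^ 2) := by
    rw [Real.exp_le_exp, neg_mul, neg_mul, neg_le_neg_iff]
    gcongr
  rw [hfactor, mul_assoc, ← mul_sub, norm_mul, Complex.norm_real, Real.norm_eq_abs, Real.abs_exp]
  calc _ ≤ Real.exp (-(N * m₀) * s ^ 2) *
        (A / N * Real.exp (m₀ / 4 * (N * s ^ 2)) * Real.exp (m₀ / 2 * (N * s ^ 2))) :=
        mul_le_mul hrate ((norm_exp_cubic_mul_sub_le hN.le hs hg hh hl hk).trans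
          (mul_le_mul_of_nonneg_right (sq_mul_quadratic_mul_exp_le (by positivity) hK hN s)
            (Real.exp_pos _).le)) (norm_nonneg _) (Real.exp_pos _).le
    _ = A / N * (Real.exp (-(N * m₀) * s ^ 2) * Real.exp (m₀ / 4 * (N * s ^ 2)) *
        Real.exp (m₀ / 2 * (N * s ^ 2))) := by ring
    _ = _ := by
        rw [← Real.exp_add, ← Real.exp_add]
        ring_nf

theorem abs_integral_gaussian_sub_le_div {m₀ m N ρ : ℝ} (hm₀ : 0 < m₀) (hm : m₀ ≤ m) (hN : 0 < N)
    (hρ : 0 < ρ) :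
    |(∫ s in (-ρ)..ρ, Real.exp (-(N * m) * s ^ 2)) - √(π / (N * m))| ≤
      2 / (m₀ * ρ ^ 2) / N * √(π / (m₀ / 4 * N)) := by
  have hb : 0 < N * m := by have := hm₀.trans_le hm; positivity
  have hexp : Real.exp (-(N * m / 2) * ρ ^ 2) ≤ 2 / (m₀ * ρ ^ 2) / N :=
    calc Real.exp (-(N * m / 2) * ρ ^ 2) ≤ Real.exp (-(N * m₀ * ρ ^ 2 / 2)) := by
          rw [Real.exp_le_exp, neg_mul, neg_le_neg_iff]
          have : N * m₀ ≤ N * m := by gcongr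
          nlinarith [sq_nonneg ρ]
      _ ≤ (N * m₀ * ρ ^ 2 / 2)⁻¹ := by
          rw [Real.exp_neg]
          gcongr
          linarith [Real.add_one_le_exp (N * m₀ * ρ ^ 2 / 2)]
      _ = 2 / (m₀ * ρ ^ 2) / N := by field_simp
  refine (abs_integral_gaussian_sub_le hb hρ.le).trans (mul_le_mul hexp ?_ (by positivity)
    (by positivity))
  have : m₀ / 4 * N ≤ N * m / 2 := by nlinarith
  gcongr

theorem norm_integral_sub_le_of_gaussian_bound {b A ρ : ℝ} (hb : 0 < b) (hA : 0 ≤ A) (hρ : 0 ≤ ρ)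
    {X Y : ℝ → ℂ} (hX : IntervalIntegrable X volume (-ρ) ρ)
    (hY : IntervalIntegrable Y volume (-ρ) ρ)
    (hXY : ∀ s ∈ Icc (-ρ) ρ, ‖X s - Y s‖ ≤ A * Real.exp (-b * s ^ 2)) :
    ‖(∫ s in (-ρ)..ρ, X s) - ∫ s in (-ρ)..ρ, Y s‖ ≤ A * √(π / b) := by
  rw [← intervalIntegral.integral_sub hX hY]
  calc _ ≤ ∫ s in (-ρ)..ρ, A * Real.exp (-b * s ^ 2) :=
        intervalIntegral.norm_integral_le_of_norm_le (by linarith)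
          (Eventually.of_forall fun s hs => hXY s (Ioc_subset_Icc_self hs))
          (Continuous.intervalIntegrable (by fun_prop) _ _)
    _ ≤ ∫ s, A * Real.exp (-b * s ^ 2) := by
        rw [intervalIntegral.integral_of_le (by linarith)]
        exact setIntegral_le_integral ((integrable_exp_neg_mul_sq hb).const_mul _)
          (Eventually.of_forall fun s => by positivity)
    _ = _ := by rw [integral_const_mul, integral_gaussian]

/-- The corrections of relative order `N^{-1/2}` to the Gaussian integrand, `h₁ s` and `N s³ k₀`,
are odd and integrate to zero, so the remainder gains a full factor `1 / N`. -/
theorem exists_norm_integral_exp_neg_sq_add_cubic_sub_le {m₀ G ρ : ℝ} (K : ℝ) (hm₀ : 0 < m₀)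
    (hρ : 0 < ρ) (hGρ : G * ρ ≤ m₀ / 2) :
    ∃ C : ℝ, ∀ m N : ℝ, m₀ ≤ m → 0 < N → ∀ (g h : ℝ → ℂ) (h₁ k₀ : ℂ),
      ContinuousOn g (Icc (-ρ) ρ) → ContinuousOn h (Icc (-ρ) ρ) →
      (∀ s ∈ Icc (-ρ) ρ, ‖g s‖ ≤ G ∧ ‖h s‖ ≤ K ∧ ‖h s - (h 0 + h₁ * s)‖ ≤ K * s ^ 2 ∧
        ‖g s * h s - k₀‖ ≤ K * |s|) →
      ‖(∫ s in (-ρ)..ρ, Complex.exp (N * (-m * s ^ 2 + s ^ 3 * g s)) * h s) -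
        √(π / (N * m)) * h 0‖ ≤ C / (N * √N) := by
  set A := 6 * G ^ 2 * K / (m₀ / 4) ^ 3 + 2 * K / (m₀ / 4) ^ 2 + K / (m₀ / 4)
  refine ⟨(A + 2 / (m₀ * ρ ^ 2) * K) * √(π / (m₀ / 4)), fun m N hm hN g h h₁ k₀ hg hh hyp => ?_⟩
  set E : ℝ → ℝ := fun s => Real.exp (-(N * m) * s ^ 2)
  obtain ⟨-, hh₀, -⟩ := hyp 0 ⟨by linarith, hρ.le⟩
  have hK : 0 ≤ K := (norm_nonneg _).trans hh₀
  have hX : IntervalIntegrable (fun s => Complex.exp (N * (-m * s ^ 2 + s ^ 3 * g s)) * h s) volume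
      (-ρ) ρ :=
    ContinuousOn.intervalIntegrable_of_Icc (by linarith) (by fun_prop)
  have hgauss : IntervalIntegrable (fun s => (E s : ℂ) * h 0) volume (-ρ) ρ :=
    Continuous.intervalIntegrable (by fun_prop) _ _
  have hodd : IntervalIntegrable (fun s : ℝ => (E s : ℂ) * (h₁ * s + N * k₀ * s ^ 3)) volume
      (-ρ) ρ :=
    Continuous.intervalIntegrable (by fun_prop) _ _
  have hmodel : ∫ s in (-ρ)..ρ, ((E s : ℂ) * h 0 + (E s : ℂ) * (h₁ * s + N * k₀ * s ^ 3)) =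
      (∫ s in (-ρ)..ρ, E s : ℝ) * h 0 := by
    rw [intervalIntegral.integral_add hgauss hodd, integral_gaussian_mul_odd_eq_zero, add_zero,
      intervalIntegral.integral_mul_const, intervalIntegral.integral_ofReal]
  have hpert := norm_integral_sub_le_of_gaussian_bound (b := m₀ / 4 * N) (A := A / N)
    (by positivity) (by positivity) hρ.le hX (hgauss.add hodd) fun s hs => by
      obtain ⟨hgs, hhs, hls, hks⟩ := hyp s hs
      have hGs : G * |s| ≤ m₀ / 2 := (mul_le_mul_of_nonneg_left (abs_le.2 hs)
        ((norm_nonneg _).trans hgs)).trans hGρ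
      convert norm_exp_neg_sq_add_cubic_mul_sub_le hm₀ hm hN hGs hgs hhs hls hks using 2
      ring
  have htail := mul_le_mul (abs_integral_gaussian_sub_le_div hm₀ hm hN hρ) hh₀ (norm_nonneg _)
    (by positivity)
  rw [← Real.norm_eq_abs, ← Complex.norm_real, ← norm_mul, Complex.ofReal_sub, sub_mul, ← hmodel]
    at htail
  refine (norm_sub_le_norm_sub_add_norm_sub _ _ _).trans ((add_le_add hpert htail).trans_eq ?_)
  rw [← div_div π, Real.sqrt_div (by positivity)]
  field_simp

section Line

variable {k : ℂ → ℂ} {c d : ℂ} {R M : ℝ} {u : ℝ}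

theorem norm_comp_line_sub_le (hk : DifferentiableOn ℂ k (ball c R))
    (hM : ∀ w ∈ ball c R, ‖k w‖ ≤ M) (hu : c + d * u ∈ ball c R) :
    ‖k (c + d * u) - k c‖ ≤ 2 / R * M * ‖d‖ * |u| := by
  obtain ⟨g, -, hkg, hg⟩ := exists_taylor_remainder (pos_of_mem_ball hu) hk hM 1
  have hexpand : k (c + d * u) - k c = g (c + d * u) * (d * u) := by
    rw [hkg (c + d * u)]
    simp [mul_comm]
  rw [hexpand, norm_mul, norm_mul, Complex.norm_real, Real.norm_eq_abs, mul_assoc,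
    ← pow_one (2 / R)]
  gcongr
  exact hg _ hu

theorem norm_comp_line_sub_linear_le (hk : DifferentiableOn ℂ k (ball c R))
    (hM : ∀ w ∈ ball c R, ‖k w‖ ≤ M) (hu : c + d * u ∈ ball c R) :
    ‖k (c + d * u) - (k c + deriv k c * d * u)‖ ≤ (2 / R) ^ 2 * M * ‖d‖ ^ 2 * u ^ 2 := by
  obtain ⟨g, -, hkg, hg⟩ := exists_taylor_remainder (pos_of_mem_ball hu) hk hM 2
  have hexpand : k (c + d * u) - (k c + deriv k c * d * u) = g (c + d * u) * (d * u) ^ 2 := by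
    rw [hkg (c + d * u)]
    simp only [Finset.sum_range_succ, Finset.sum_range_zero, iteratedDeriv_zero,
      iteratedDeriv_one, Nat.factorial_zero, Nat.factorial_one, Nat.cast_one, div_one, pow_zero,
      pow_one, add_sub_cancel_left]
    ring
  rw [hexpand, norm_mul, norm_pow, norm_mul, Complex.norm_real, Real.norm_eq_abs, mul_pow, sq_abs,
    mul_assoc]
  gcongr
  exact hg _ hu

end Line

theorem exists_norm_integral_saddle_sub_le {R B m₀ ρ : ℝ} {d : ℂ} (hm₀ : 0 < m₀) (hρ : 0 < ρ)
    (hρR : ‖d‖ * ρ < R) (hBρ : ‖d‖ ^ 3 * ((2 / R) ^ 3 * B) * ρ ≤ m₀ / 2) :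
    ∃ C : ℝ, ∀ (f f' h : ℂ → ℂ) (c f'' : ℂ) (m N : ℝ),
      (∀ w ∈ ball c R, HasDerivAt f (f' w) w) → HasDerivAt f' f'' c →
      DifferentiableOn ℂ h (ball c R) → (∀ w ∈ ball c R, ‖f w‖ ≤ B) →
      (∀ w ∈ ball c R, ‖h w‖ ≤ B) → f' c = 0 → d ^ 2 * f'' / 2 = -m → m₀ ≤ m → 0 < N →
      ‖(∫ u in (-ρ)..ρ, Complex.exp (N * f (c + d * u)) * h (c + d * u)) -
        √(π / (N * m)) * (Complex.exp (N * f c) * h c)‖ ≤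
      ‖Complex.exp (N * f c)‖ * (C / (N * √N)) := by
  set G := ‖d‖ ^ 3 * ((2 / R) ^ 3 * B)
  set K := max B (max ((2 / R) ^ 2 * B * ‖d‖ ^ 2) (2 / R * (G * B) * ‖d‖)) with hK
  obtain ⟨C, hC⟩ := exists_norm_integral_exp_neg_sq_add_cubic_sub_le K hm₀ hρ hBρ
  refine ⟨C, fun f f' h c f'' m N hf hf' hh hfB hhB hc hdm hm hN => ?_⟩
  have hR : 0 < R := (by positivity : 0 ≤ ‖d‖ * ρ).trans_lt hρR
  have hB : 0 ≤ B := (norm_nonneg _).trans (hfB c (mem_ball_self hR))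
  obtain ⟨g, hg, hfg, hgB⟩ := exists_taylor_remainder_three hR hf hf' hfB
  have hmem : ∀ u ∈ Icc (-ρ) ρ, c + d * u ∈ ball c R := fun u hu => by
    rw [mem_ball, dist_eq_norm, add_sub_cancel_left, norm_mul, Complex.norm_real]
    exact (mul_le_mul_of_nonneg_left (abs_le.2 hu) (norm_nonneg d)).trans_lt hρR
  have hdgB : ∀ w ∈ ball c R, ‖d ^ 3 * g w‖ ≤ G := fun w hw => by
    rw [norm_mul, norm_pow]
    exact mul_le_mul_of_nonneg_left (hgB w hw) (by positivity)
  have hdghB : ∀ w ∈ ball c R, ‖d ^ 3 * g w * h w‖ ≤ G * B := fun w hw => by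
    rw [norm_mul]
    exact mul_le_mul (hdgB w hw) (hhB w hw) (norm_nonneg _) (by positivity)
  have hexp (u : ℝ) : Complex.exp (N * f (c + d * u)) = Complex.exp (N * f c) *
      Complex.exp (N * (-m * u ^ 2 + u ^ 3 * (d ^ 3 * g (c + d * u)))) := by
    rw [← Complex.exp_add, hfg (c + d * u), hc, ← hdm]
    ring_nf
  have hmain := hC m N hm hN (fun u => d ^ 3 * g (c + d * u)) (fun u => h (c + d * u))
    (deriv h c * d) (d ^ 3 * g c * h c)
    (continuousOn_const.mul (hg.continuousOn.comp (by fun_prop) hmem))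
    (hh.continuousOn.comp (by fun_prop) hmem) fun u hu => by
      have hlin := norm_comp_line_sub_linear_le hh hhB (hmem u hu)
      have hconst := norm_comp_line_sub_le ((hg.const_mul (d ^ 3)).mul hh) hdghB (hmem u hu)
      simp only [Complex.ofReal_zero, mul_zero, add_zero]
      exact ⟨hdgB _ (hmem u hu), (hhB _ (hmem u hu)).trans (le_max_left _ _),
        hlin.trans (by gcongr; simp [hK]), hconst.trans (by gcongr; simp [hK])⟩
  simp only [Complex.ofReal_zero, mul_zero, add_zero] at hmain
  simp only [hexp, mul_assoc, intervalIntegral.integral_const_mul] at hmain ⊢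
  rw [mul_left_comm, ← mul_sub, norm_mul]
  gcongr

/-! ### The dispersion relation of the walk -/

section Phase

variable {r : ℝ} {w : ℂ}

/-- The strip around the real axis on which the phase `arccos (r cos t)` extends holomorphically. -/
def phaseDomain (r : ℝ) : Set ℂ := {w | r ^ 2 * Real.cosh (2 * w.im) < 1}

/-- The holomorphic extension of `sin μ(t)`, where `μ(t) = arccos (r cos t)`. -/
def sinPhase (r : ℝ) (w : ℂ) : ℂ := (1 - (r * Complex.cos w) ^ 2) ^ (2⁻¹ : ℂ)

/-- The holomorphic extension of the eigenvalue `e^{iμ(t)}`. -/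
def expPhase (r : ℝ) (w : ℂ) : ℂ := r * Complex.cos w + I * sinPhase r w

/-- The holomorphic extension of the eigenvalue `e^{-iμ(t)}`. -/
def expNegPhase (r : ℝ) (w : ℂ) : ℂ := r * Complex.cos w - I * sinPhase r w

/-- The holomorphic extension of the phase `μ`. -/
def phase (r : ℝ) (w : ℂ) : ℂ := -I * Complex.log (expPhase r w)

/-- The holomorphic extension of the group velocity `μ'`. -/
def groupVelocity (r : ℝ) (w : ℂ) : ℂ := r * Complex.sin w / sinPhase r w

theorem ofReal_mem_phaseDomain (hr : r ^ 2 < 1) (t : ℝ) : (t : ℂ) ∈ phaseDomain r := by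
  simpa [phaseDomain] using hr

theorem isOpen_phaseDomain (r : ℝ) : IsOpen (phaseDomain r) :=
  isOpen_lt (by fun_prop) continuous_const

theorem exists_horizontalStrip_subset_phaseDomain (hr : r ^ 2 < 1) :
    ∃ δ > 0, horizontalStrip δ ⊆ phaseDomain r := by
  have hopen : IsOpen {y : ℝ | r ^ 2 * Real.cosh (2 * y) < 1} :=
    isOpen_lt (by fun_prop) continuous_const
  obtain ⟨δ, hδ, hball⟩ := Metric.isOpen_iff.1 hopen 0 (by simpa using hr)
  exact ⟨δ, hδ, fun w hw => hball (by simpa [mem_horizontalStrip] using hw)⟩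

theorem re_cos (w : ℂ) : (Complex.cos w).re = Real.cos w.re * Real.cosh w.im := by
  rw [Complex.cos_eq, ← Complex.ofReal_cos, ← Complex.ofReal_cosh, ← Complex.ofReal_sin,
    ← Complex.ofReal_sinh]
  simp only [Complex.sub_re, Complex.re_mul_ofReal, Complex.ofReal_re, Complex.mul_I_re,
    Complex.im_mul_ofReal, Complex.ofReal_im, zero_mul, neg_zero, sub_zero]

theorem im_cos (w : ℂ) : (Complex.cos w).im = -(Real.sin w.re * Real.sinh w.im) := by
  rw [Complex.cos_eq, ← Complex.ofReal_cos, ← Complex.ofReal_cosh, ← Complex.ofReal_sin,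
    ← Complex.ofReal_sinh]
  simp only [Complex.sub_im, Complex.im_mul_ofReal, Complex.ofReal_im, Complex.mul_I_im,
    Complex.re_mul_ofReal, Complex.ofReal_re, zero_mul, zero_sub]

theorem sq_mul_sinh_lt_re (hw : w ∈ phaseDomain r) :
    (r * Real.sinh w.im) ^ 2 < (1 - (r * Complex.cos w) ^ 2).re := by
  have hre : (1 - (r * Complex.cos w) ^ 2).re =
      1 - r ^ 2 * ((Complex.cos w).re ^ 2 - (Complex.cos w).im ^ 2) := by
    simp only [pow_two, Complex.sub_re, Complex.one_re, Complex.mul_re, Complex.mul_im,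
      Complex.ofReal_re, Complex.ofReal_im]
    ring
  have hcos : (Complex.cos w).re ^ 2 - (Complex.cos w).im ^ 2 ≤ Real.cosh w.im ^ 2 := by
    rw [re_cos, mul_pow]
    exact (sub_le_self _ (sq_nonneg _)).trans
      (mul_le_of_le_one_left (sq_nonneg _) (Real.cos_sq_le_one _))
  have hdom : r ^ 2 * (Real.cosh w.im ^ 2 + Real.sinh w.im ^ 2) < 1 := by
    rw [← Real.cosh_two_mul]; exact hw
  linarith [mul_le_mul_of_nonneg_left hcos (sq_nonneg r)]

theorem re_one_sub_pos (hw : w ∈ phaseDomain r) : 0 < (1 - (r * Complex.cos w) ^ 2).re :=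
  (sq_nonneg _).trans_lt (sq_mul_sinh_lt_re hw)

theorem sq_sinPhase (r : ℝ) (w : ℂ) : sinPhase r w ^ 2 = 1 - (r * Complex.cos w) ^ 2 :=
  Complex.cpow_ofNat_inv_pow _ 2

theorem re_sinPhase_pos (hw : w ∈ phaseDomain r) : 0 < (sinPhase r w).re := by
  rw [sinPhase, Complex.cpow_inv_two_re]
  have := re_one_sub_pos hw
  positivity

theorem sinPhase_ne_zero (hw : w ∈ phaseDomain r) : sinPhase r w ≠ 0 := fun h =>
  (re_sinPhase_pos hw).ne' (by rw [h, Complex.zero_re])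

theorem hasDerivAt_sinPhase (hw : w ∈ phaseDomain r) :
    HasDerivAt (sinPhase r) (r ^ 2 * Complex.cos w * Complex.sin w / sinPhase r w) w := by
  have hbase : HasDerivAt (fun w => 1 - (r * Complex.cos w) ^ 2)
      (2 * (r ^ 2 * Complex.cos w * Complex.sin w)) w := by
    refine ((((Complex.hasDerivAt_cos w).const_mul (r : ℂ)).pow 2).const_sub 1).congr_deriv ?_
    push_cast; ring
  have hslit : 1 - (r * Complex.cos w) ^ 2 ∈ Complex.slitPlane := Or.inl (re_one_sub_pos hw)
  have hpow : (1 - (r * Complex.cos w) ^ 2) ^ ((2⁻¹ : ℂ) - 1) = (sinPhase r w)⁻¹ := by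
    rw [Complex.cpow_sub _ _ (Complex.slitPlane_ne_zero hslit), Complex.cpow_one]
    change sinPhase r w / _ = _
    rw [← sq_sinPhase, pow_two, div_mul_cancel_left₀ (sinPhase_ne_zero hw)]
  refine (hbase.cpow_const hslit).congr_deriv ?_
  rw [hpow]
  ring

/-- The square root dominates `|Im (r cos w)|` on the domain, so the eigenvalue stays in the upper
half-plane, where the principal logarithm is holomorphic. -/
theorem im_expPhase_pos (hw : w ∈ phaseDomain r) : 0 < (expPhase r w).im := by
  have him : (expPhase r w).im = (sinPhase r w).re - Real.sin w.re * (r * Real.sinh w.im) := by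
    simp only [expPhase, Complex.add_im, Complex.im_ofReal_mul, im_cos, Complex.I_mul_im]
    ring
  have hsq : (r * Real.sinh w.im) ^ 2 < (sinPhase r w).re ^ 2 := by
    have hre : (sinPhase r w ^ 2).re = (sinPhase r w).re ^ 2 - (sinPhase r w).im ^ 2 := by
      simp [pow_two]
    have hlt := sq_mul_sinh_lt_re hw
    rw [← sq_sinPhase, hre] at hlt
    linarith [sq_nonneg (sinPhase r w).im]
  rw [him, sub_pos]
  calc Real.sin w.re * (r * Real.sinh w.im)
      ≤ |Real.sin w.re| * |r * Real.sinh w.im| := (le_abs_self _).trans (abs_mul _ _).le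
    _ ≤ |r * Real.sinh w.im| := mul_le_of_le_one_left (abs_nonneg _) (Real.abs_sin_le_one _)
    _ < (sinPhase r w).re := abs_lt_of_sq_lt_sq hsq (re_sinPhase_pos hw).le

theorem expPhase_mem_slitPlane (hw : w ∈ phaseDomain r) : expPhase r w ∈ Complex.slitPlane :=
  Or.inr (im_expPhase_pos hw).ne'

theorem exp_I_mul_phase (hw : w ∈ phaseDomain r) :
    Complex.exp (I * phase r w) = expPhase r w := by
  rw [phase, ← mul_assoc, mul_neg, Complex.I_mul_I, neg_neg, one_mul,
    Complex.exp_log (Complex.slitPlane_ne_zero (expPhase_mem_slitPlane hw))]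

theorem hasDerivAt_expPhase (hw : w ∈ phaseDomain r) :
    HasDerivAt (expPhase r) (I * groupVelocity r w * expPhase r w) w := by
  have hS := sinPhase_ne_zero hw
  refine (((Complex.hasDerivAt_cos w).const_mul (r : ℂ)).add
    ((hasDerivAt_sinPhase hw).const_mul I)).congr_deriv ?_
  rw [groupVelocity, expPhase]
  field_simp
  linear_combination (-sinPhase r w * r * Complex.sin w) * Complex.I_sq

theorem hasDerivAt_phase (hw : w ∈ phaseDomain r) :
    HasDerivAt (phase r) (groupVelocity r w) w := by
  have hL := Complex.slitPlane_ne_zero (expPhase_mem_slitPlane hw)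
  refine (((hasDerivAt_expPhase hw).clog (expPhase_mem_slitPlane hw)).const_mul (-I)).congr_deriv ?_
  field_simp
  linear_combination (-groupVelocity r w) * Complex.I_sq

theorem hasDerivAt_groupVelocity (hw : w ∈ phaseDomain r) :
    HasDerivAt (groupVelocity r) (r * (1 - r ^ 2) * Complex.cos w / sinPhase r w ^ 3) w := by
  have hS := sinPhase_ne_zero hw
  refine (((Complex.hasDerivAt_sin w).const_mul (r : ℂ)).div
    (hasDerivAt_sinPhase hw) hS).congr_deriv ?_
  field_simp
  linear_combination (r * Complex.cos w) *
    (sq_sinPhase r w - (r : ℂ) ^ 2 * Complex.sin_sq_add_cos_sq w)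

theorem sinPhase_add_two_pi (r : ℝ) (w : ℂ) : sinPhase r (w + 2 * π) = sinPhase r w := by
  rw [sinPhase, Complex.cos_add_two_pi, sinPhase]

theorem sinPhase_add_pi (r : ℝ) (w : ℂ) : sinPhase r (w + π) = sinPhase r w := by
  rw [sinPhase, Complex.cos_add_pi, mul_neg, neg_sq, sinPhase]

theorem expPhase_add_two_pi (r : ℝ) (w : ℂ) : expPhase r (w + 2 * π) = expPhase r w := by
  rw [expPhase, sinPhase_add_two_pi, Complex.cos_add_two_pi, expPhase]

theorem expPhase_add_pi (r : ℝ) (w : ℂ) : expPhase r (w + π) = -expNegPhase r w := by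
  rw [expPhase, sinPhase_add_pi, Complex.cos_add_pi, expNegPhase]
  ring

end Phase

/-! ### The phase on the real axis -/

section RealPhase

variable {r : ℝ}

/-- `sin μ(t)`, the value of `sinPhase r` at a real point. -/
def sinPhaseReal (r t : ℝ) : ℝ := √(1 - (r * Real.cos t) ^ 2)

/-- `μ'(t)`, the value of `groupVelocity r` at a real point. -/
def groupVelocityReal (r t : ℝ) : ℝ := r * Real.sin t / sinPhaseReal r t

theorem sq_mul_cos_lt_one (hr : r ^ 2 < 1) (t : ℝ) : (r * Real.cos t) ^ 2 < 1 := by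
  rw [mul_pow]
  exact (mul_le_of_le_one_right (sq_nonneg r) (Real.cos_sq_le_one t)).trans_lt hr

theorem sq_sinPhaseReal (hr : r ^ 2 < 1) (t : ℝ) :
    sinPhaseReal r t ^ 2 = 1 - (r * Real.cos t) ^ 2 :=
  Real.sq_sqrt (sub_nonneg.2 (sq_mul_cos_lt_one hr t).le)

theorem sinPhaseReal_pos (hr : r ^ 2 < 1) (t : ℝ) : 0 < sinPhaseReal r t :=
  Real.sqrt_pos.2 (sub_pos.2 (sq_mul_cos_lt_one hr t))

theorem sinPhaseReal_le_one (r t : ℝ) : sinPhaseReal r t ≤ 1 :=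
  Real.sqrt_le_one.2 (sub_le_self _ (sq_nonneg _))

theorem sinPhase_ofReal (hr : r ^ 2 < 1) (t : ℝ) : sinPhase r t = sinPhaseReal r t := by
  have hpos : 0 ≤ 1 - (r * Real.cos t) ^ 2 := sub_nonneg.2 (sq_mul_cos_lt_one hr t).le
  rw [sinPhase, sinPhaseReal, Real.sqrt_eq_rpow, Complex.ofReal_cpow hpos]
  push_cast
  norm_num

theorem groupVelocity_ofReal (hr : r ^ 2 < 1) (t : ℝ) :
    groupVelocity r t = groupVelocityReal r t := by
  rw [groupVelocity, sinPhase_ofReal hr, groupVelocityReal]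
  push_cast
  rfl

theorem sinPhaseReal_pi_sub (r t : ℝ) : sinPhaseReal r (π - t) = sinPhaseReal r t := by
  rw [sinPhaseReal, Real.cos_pi_sub, mul_neg, neg_sq, sinPhaseReal]

theorem groupVelocityReal_pi_sub (r t : ℝ) :
    groupVelocityReal r (π - t) = groupVelocityReal r t := by
  rw [groupVelocityReal, sinPhaseReal_pi_sub, Real.sin_pi_sub, groupVelocityReal]

theorem norm_expPhase_ofReal (hr : r ^ 2 < 1) (t : ℝ) : ‖expPhase r t‖ = 1 := by
  have h : expPhase r t = (r * Real.cos t : ℝ) + (sinPhaseReal r t : ℝ) * I := by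
    rw [expPhase, sinPhase_ofReal hr]; push_cast; ring
  rw [h, Complex.norm_add_mul_I, sq_sinPhaseReal hr, add_sub_cancel, Real.sqrt_one]

theorem im_phase_ofReal (hr : r ^ 2 < 1) (t : ℝ) : (phase r t).im = 0 := by
  have h := norm_expPhase_ofReal hr t
  rw [← exp_I_mul_phase (ofReal_mem_phaseDomain hr t), Complex.norm_exp] at h
  simpa using h

theorem hasDerivAt_mul_div_sqrt {c x : ℝ} (r : ℝ) (hx : 0 < c + r ^ 2 * x ^ 2) :
    HasDerivAt (fun x => r * x / √(c + r ^ 2 * x ^ 2)) (r * c / √(c + r ^ 2 * x ^ 2) ^ 3) x := by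
  have hbase : HasDerivAt (fun x : ℝ => c + r ^ 2 * x ^ 2) (r ^ 2 * (2 * x)) x := by
    simpa using ((hasDerivAt_pow 2 x).const_mul (r ^ 2)).const_add c
  have hne : √(c + r ^ 2 * x ^ 2) ≠ 0 := (Real.sqrt_pos.2 hx).ne'
  refine (((hasDerivAt_id x).const_mul r).div (hbase.sqrt hx.ne') hne).congr_deriv ?_
  have hsq := Real.sq_sqrt hx.le
  simp only [id]
  field_simp
  rw [hsq]
  ring

theorem groupVelocityReal_eq_mul_sin_div_sqrt (r t : ℝ) :
    groupVelocityReal r t = r * Real.sin t / √(1 - r ^ 2 + r ^ 2 * Real.sin t ^ 2) := by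
  rw [groupVelocityReal, sinPhaseReal, mul_pow, Real.cos_sq']
  ring_nf

theorem mul_sin_sub_sin_le_groupVelocityReal_sub {t t' : ℝ} (hr0 : 0 ≤ r) (hr : r ^ 2 < 1)
    (h : Real.sin t ≤ Real.sin t') :
    r * (1 - r ^ 2) * (Real.sin t' - Real.sin t) ≤
      groupVelocityReal r t' - groupVelocityReal r t := by
  have : 0 < 1 - r ^ 2 := sub_pos.2 hr
  have hder (x : ℝ) := hasDerivAt_mul_div_sqrt (c := 1 - r ^ 2) (x := x) r (by positivity)
  rw [groupVelocityReal_eq_mul_sin_div_sqrt, groupVelocityReal_eq_mul_sin_div_sqrt]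
  refine (convex_Icc (-1 : ℝ) 1).mul_sub_le_image_sub_of_le_deriv
    (fun x _ => (hder x).continuousAt.continuousWithinAt)
    (fun x _ => (hder x).differentiableAt.differentiableWithinAt) (fun x hx => ?_)
    _ (Real.sin_mem_Icc t) _ (Real.sin_mem_Icc t') h
  obtain ⟨hx1, hx2⟩ : x ∈ Icc (-1 : ℝ) 1 := interior_subset hx
  have hpos : 0 < √(1 - r ^ 2 + r ^ 2 * x ^ 2) := Real.sqrt_pos.2 (by positivity)
  have hle : √(1 - r ^ 2 + r ^ 2 * x ^ 2) ≤ 1 := Real.sqrt_le_one.2 (by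
    nlinarith [sq_nonneg r, (sq_le_one_iff_abs_le_one x).2 (abs_le.2 ⟨hx1, hx2⟩)])
  rw [(hder x).deriv, le_div_iff₀ (pow_pos hpos 3)]
  exact mul_le_of_le_one_right (by positivity) (pow_le_one₀ hpos.le hle)

theorem mul_le_sin_sub_sin {c ρ t₀ t : ℝ} (hc : c ≤ Real.cos t₀) (hρ : 0 ≤ ρ) (hρc : ρ ≤ c / 2)
    (ht₀ : -(π / 2) ≤ t₀) (hlo : t₀ + ρ ≤ t) (hhi : t ≤ π - t₀ - ρ) :
    c * ρ / 4 ≤ Real.sin t - Real.sin t₀ := by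
  have hcos1 := Real.cos_le_one t₀
  have hends : Real.sin (t₀ + ρ) ≤ Real.sin t := by
    rw [← Real.cos_pi_div_two_sub, ← Real.cos_sub_pi_div_two t, ← Real.cos_abs (t - π / 2)]
    refine Real.cos_le_cos_of_nonneg_of_le_pi (abs_nonneg _) (by linarith) (abs_le.2 ⟨?_, ?_⟩) <;>
      linarith
  have hsinρ : 1 / 2 * ρ ≤ Real.sin ρ := by
    refine (mul_le_mul_of_nonneg_right ?_ hρ).trans
      (Real.mul_le_sin hρ (by linarith [Real.pi_gt_three]))
    rw [div_le_div_iff₀ two_pos Real.pi_pos]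
    linarith [Real.pi_le_four]
  have hcosρ : Real.sin t₀ * (1 - Real.cos ρ) ≤ ρ ^ 2 / 2 :=
    (mul_le_of_le_one_left (sub_nonneg.2 (Real.cos_le_one ρ)) (Real.sin_le_one t₀)).trans
      (by linarith [Real.one_sub_sq_div_two_le_cos (x := ρ)])
  have hmul : c * (1 / 2 * ρ) ≤ Real.cos t₀ * Real.sin ρ :=
    mul_le_mul hc hsinρ (by positivity) (by linarith)
  rw [Real.sin_add] at hends
  nlinarith

end RealPhase

/-! ### The oscillatory integral -/

section OscillatoryIntegral

variable {r : ℝ} {H : ℂ → ℂ} {R B : ℝ}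

/-- The second derivative `μ''(t)` of the phase at a real point. -/
def phaseCurvature (r t : ℝ) : ℝ := r * (1 - r ^ 2) * Real.cos t / sinPhaseReal r t ^ 3

/-- The integrand `e^{inμ(w)} e^{-iyw} H(w)` of the Fourier representation of the walk, with
amplitude `H`. -/
def walkIntegrand (r : ℝ) (H : ℂ → ℂ) (n : ℕ) (y : ℤ) (w : ℂ) : ℂ :=
  expPhase r w ^ n * Complex.exp (-(I * y * w)) * H w

/-- On `s`, the number `B` bounds the amplitude `H`, the phase `μ`, and every exponent `μ(w) - ξ w`
with `|ξ| ≤ 1`. -/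
def PhaseAmplitudeBound (r : ℝ) (H : ℂ → ℂ) (B : ℝ) (s : Set ℂ) : Prop :=
  ∀ w ∈ s, w ∈ phaseDomain r ∧ ‖phase r w‖ + ‖w‖ ≤ B ∧ ‖H w‖ ≤ B

theorem hasDerivAt_groupVelocity_ofReal (hr : r ^ 2 < 1) (t : ℝ) :
    HasDerivAt (groupVelocity r) (phaseCurvature r t) t := by
  refine (hasDerivAt_groupVelocity (ofReal_mem_phaseDomain hr t)).congr_deriv ?_
  rw [sinPhase_ofReal hr, phaseCurvature]
  push_cast
  rfl

theorem abs_groupVelocityReal_le_one (hr : r ^ 2 < 1) (t : ℝ) : |groupVelocityReal r t| ≤ 1 := by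
  rw [groupVelocityReal, abs_div, abs_of_pos (sinPhaseReal_pos hr t),
    div_le_one (sinPhaseReal_pos hr t)]
  refine abs_le_of_sq_le_sq ?_ (sinPhaseReal_pos hr t).le
  rw [sq_sinPhaseReal hr]
  nlinarith [Real.sin_sq_add_cos_sq t]

theorem phaseCurvature_pi_sub (r t : ℝ) : phaseCurvature r (π - t) = -phaseCurvature r t := by
  rw [phaseCurvature, sinPhaseReal_pi_sub, Real.cos_pi_sub, phaseCurvature]
  ring

theorem mul_le_phaseCurvature {c t : ℝ} (hr0 : 0 ≤ r) (hr : r ^ 2 < 1) (hc : 0 ≤ c)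
    (hct : c ≤ Real.cos t) : r * (1 - r ^ 2) * c ≤ phaseCurvature r t := by
  have : 0 < 1 - r ^ 2 := sub_pos.2 hr
  have hS := sinPhaseReal_pos hr t
  rw [phaseCurvature, le_div_iff₀ (by positivity)]
  exact (mul_le_of_le_one_right (by positivity) (pow_le_one₀ hS.le (sinPhaseReal_le_one r t))).trans
    (by gcongr)

theorem walkIntegrand_eq {n : ℕ} (hn : n ≠ 0) (y : ℤ) {w : ℂ} (hw : w ∈ phaseDomain r) :
    walkIntegrand r H n y w =
      Complex.exp ((n : ℝ) * (I * (phase r w - (y / n : ℝ) * w))) * H w := by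
  rw [walkIntegrand, ← exp_I_mul_phase hw, ← Complex.exp_nat_mul, ← Complex.exp_add]
  push_cast
  congr 2
  field_simp
  ring

theorem differentiableOn_walkIntegrand (hH : DifferentiableOn ℂ H (phaseDomain r)) (n : ℕ) (y : ℤ) :
    DifferentiableOn ℂ (walkIntegrand r H n y) (phaseDomain r) := by
  have hexp : DifferentiableOn ℂ (expPhase r) (phaseDomain r) := fun w hw =>
    (hasDerivAt_expPhase hw).differentiableAt.differentiableWithinAt
  unfold walkIntegrand
  fun_prop

theorem walkIntegrand_periodic (hper : Function.Periodic H (2 * π)) (n : ℕ) (y : ℤ) :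
    Function.Periodic (walkIntegrand r H n y) (2 * π) := fun w => by
  rw [walkIntegrand, walkIntegrand, expPhase_add_two_pi, hper,
    show -(I * y * (w + 2 * π)) = -(I * y * w) - y * (2 * π * I) by ring,
    Complex.exp_periodic.sub_int_mul_eq]

/-- Tubes around compact sets, applied to the segment `[-π, 3π]`, which contains the real parts of
all points of the deformed contour. -/
theorem exists_phaseAmplitudeBound (hr : r ^ 2 < 1) (hH : ContinuousOn H (phaseDomain r)) :
    ∃ R > 0, ∃ B, ∀ t ∈ Icc (-π) (3 * π), PhaseAmplitudeBound r H B (ball (t : ℂ) R) := by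
  set K : Set ℂ := Complex.ofReal '' Icc (-π) (3 * π)
  have hKc : IsCompact K := isCompact_Icc.image Complex.continuous_ofReal
  have hKU : K ⊆ phaseDomain r := image_subset_iff.2 fun t _ => ofReal_mem_phaseDomain hr t
  obtain ⟨R, hR, hRU⟩ := hKc.exists_cthickening_subset_open (isOpen_phaseDomain r) hKU
  have hphase : ContinuousOn (phase r) (phaseDomain r) := fun w hw =>
    (hasDerivAt_phase hw).continuousAt.continuousWithinAt
  obtain ⟨B₁, hB₁⟩ := hKc.cthickening.exists_bound_of_continuousOn (hphase.mono hRU)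
  obtain ⟨B₂, hB₂⟩ := hKc.cthickening.exists_bound_of_continuousOn (hH.mono hRU)
  obtain ⟨B₃, hB₃⟩ := (hKc.cthickening (r := R)).exists_bound_of_continuousOn continuousOn_id
  refine ⟨R, hR, max (B₁ + B₃) B₂, fun t ht w hw => ?_⟩
  have hwK : w ∈ cthickening R K :=
    mem_cthickening_of_dist_le w t R K (mem_image_of_mem _ ht) (mem_ball.1 hw).le
  exact ⟨hRU hwK, (add_le_add (hB₁ w hwK) (hB₃ w hwK)).trans (le_max_left _ _),
    (hB₂ w hwK).trans (le_max_right _ _)⟩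

theorem PhaseAmplitudeBound.norm_exponent_le {s : Set ℂ} (h : PhaseAmplitudeBound r H B s) {ξ : ℝ}
    (hξ : |ξ| ≤ 1) {w : ℂ} (hw : w ∈ s) : ‖I * (phase r w - ξ * w)‖ ≤ B := by
  rw [norm_mul, Complex.norm_I, one_mul]
  refine (norm_sub_le _ _).trans (le_trans ?_ (h w hw).2.1)
  rw [norm_mul, Complex.norm_real]
  gcongr
  exact mul_le_of_le_one_left (norm_nonneg w) hξ

theorem PhaseAmplitudeBound.norm_phase_le {s : Set ℂ} (h : PhaseAmplitudeBound r H B s) {w : ℂ}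
    (hw : w ∈ s) : ‖phase r w‖ ≤ B :=
  (le_add_of_nonneg_right (norm_nonneg w)).trans (h w hw).2.1

theorem exists_norm_integral_walkIntegrand_saddle_sub_le {m₀ ρ : ℝ} {d : ℂ} (hr : r ^ 2 < 1)
    (hH : DifferentiableOn ℂ H (phaseDomain r)) (hm₀ : 0 < m₀) (hρ : 0 < ρ) (hρR : ‖d‖ * ρ < R)
    (hBρ : ‖d‖ ^ 3 * ((2 / R) ^ 3 * B) * ρ ≤ m₀ / 2) :
    ∃ C : ℝ, ∀ (n : ℕ) (y : ℤ) (t m : ℝ), n ≠ 0 → PhaseAmplitudeBound r H B (ball (t : ℂ) R) →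
      groupVelocityReal r t = y / n → d ^ 2 * (I * phaseCurvature r t) / 2 = -m → m₀ ≤ m →
      ‖(∫ u in (-ρ)..ρ, walkIntegrand r H n y (t + d * u)) -
        √(π / (n * m)) * walkIntegrand r H n y t‖ ≤ C / (n * √n) := by
  obtain ⟨C, hC⟩ := exists_norm_integral_saddle_sub_le hm₀ hρ hρR hBρ
  refine ⟨C, fun n y t m hn hb hv hd hm => ?_⟩
  have ht := ofReal_mem_phaseDomain hr t
  have hξ : |(y / n : ℝ)| ≤ 1 := hv ▸ abs_groupVelocityReal_le_one hr t
  have hmem {u : ℝ} (hu : u ∈ uIcc (-ρ) ρ) : t + d * u ∈ ball (t : ℂ) R := by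
    rw [uIcc_of_le (by linarith)] at hu
    rw [mem_ball, dist_eq_norm, add_sub_cancel_left, norm_mul, Complex.norm_real]
    exact (mul_le_mul_of_nonneg_left (abs_le.2 hu) (norm_nonneg d)).trans_lt hρR
  have hunit : ‖Complex.exp ((n : ℝ) * (I * (phase r t - (y / n : ℝ) * t)))‖ = 1 := by
    rw [Complex.norm_exp, Complex.re_ofReal_mul, Complex.I_mul_re, Complex.sub_im,
      im_phase_ofReal hr, ← Complex.ofReal_mul, Complex.ofReal_im, sub_zero, neg_zero, mul_zero,
      Real.exp_zero]
  have hmain := hC (fun w => I * (phase r w - (y / n : ℝ) * w))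
    (fun w => I * (groupVelocity r w - (y / n : ℝ))) H t (I * phaseCurvature r t) m n
    (fun w hw => by
      simpa using ((hasDerivAt_phase (hb w hw).1).sub
        ((hasDerivAt_id w).const_mul ((y / n : ℝ) : ℂ))).const_mul I)
    (((hasDerivAt_groupVelocity_ofReal hr t).sub_const _).const_mul I)
    (hH.mono fun w hw => (hb w hw).1) (fun w hw => hb.norm_exponent_le hξ hw)
    (fun w hw => (hb w hw).2.2) (by simp only [groupVelocity_ofReal hr, hv, sub_self, mul_zero])
    hd hm (Nat.cast_pos.2 (Nat.pos_of_ne_zero hn))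
  rw [hunit, one_mul] at hmain
  rw [intervalIntegral.integral_congr fun u hu => walkIntegrand_eq hn y (hb _ (hmem hu)).1,
    walkIntegrand_eq hn y ht]
  exact hmain

/-- In the Taylor expansion of the phase at the real point `t`, evaluated at `t + ih`, the quadratic
term is real, so that `Im μ(t + ih) = μ'(t) h + O(h³)`. -/
theorem abs_im_phase_sub_le {t h : ℝ} (hr : r ^ 2 < 1)
    (hb : PhaseAmplitudeBound r H B (ball (t : ℂ) R)) (hh : |h| < R) :
    |(phase r (h * I + t)).im - groupVelocityReal r t * h| ≤ (2 / R) ^ 3 * B * |h| ^ 3 := by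
  obtain ⟨g, -, hg, hgB⟩ := exists_taylor_remainder_three ((abs_nonneg h).trans_lt hh)
    (fun w hw => hasDerivAt_phase (hb w hw).1) (hasDerivAt_groupVelocity_ofReal hr t)
    fun w hw => hb.norm_phase_le hw
  have hw : h * I + t ∈ ball (t : ℂ) R := by simpa [dist_eq_norm] using hh
  have hquad : (phaseCurvature r t : ℂ) / 2 * (h * I) ^ 2 =
      ((-(phaseCurvature r t / 2 * h ^ 2) : ℝ) : ℂ) := by
    rw [mul_pow, Complex.I_sq]; push_cast; ring
  have him : (phase r (h * I + t)).im - groupVelocityReal r t * h =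
      ((h * I) ^ 3 * g (h * I + t)).im := by
    rw [hg (h * I + t), add_sub_cancel_right, hquad, groupVelocity_ofReal hr, Complex.add_im,
      Complex.add_im, Complex.add_im, im_phase_ofReal hr, Complex.ofReal_im, ← mul_assoc,
      ← Complex.ofReal_mul, Complex.im_ofReal_mul, Complex.I_im]
    ring
  calc |(phase r (h * I + t)).im - groupVelocityReal r t * h|
      ≤ ‖(h * I) ^ 3 * g (h * I + t)‖ := him ▸ Complex.abs_im_le_norm _
    _ = |h| ^ 3 * ‖g (h * I + t)‖ := by
      rw [norm_mul, norm_pow, norm_mul, Complex.norm_real, Complex.norm_I, mul_one,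
        Real.norm_eq_abs]
    _ ≤ |h| ^ 3 * ((2 / R) ^ 3 * B) := by gcongr; exact hgB _ hw
    _ = (2 / R) ^ 3 * B * |h| ^ 3 := mul_comm _ _

theorem norm_walkIntegrand_horizontal_le {κ t h : ℝ} {n : ℕ} {y : ℤ} (hr : r ^ 2 < 1)
    (hb : PhaseAmplitudeBound r H B (ball (t : ℂ) R)) (hh : |h| < R)
    (hκ : (2 / R) ^ 3 * B * |h| ≤ κ / 2) (hn : n ≠ 0)
    (hv : κ * h ^ 2 ≤ (groupVelocityReal r t - y / n) * h) :
    ‖walkIntegrand r H n y (h * I + t)‖ ≤ B * Real.exp (-(κ * h ^ 2 / 2 * n)) := by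
  have hw : h * I + t ∈ ball (t : ℂ) R := by simpa [dist_eq_norm] using hh
  obtain ⟨hdom, -, hHB⟩ := hb _ hw
  have him := (abs_le.1 (abs_im_phase_sub_le hr hb hh)).1
  have hcubic : (2 / R) ^ 3 * B * |h| ^ 3 ≤ κ / 2 * h ^ 2 := by
    rw [pow_succ' |h|, sq_abs, ← mul_assoc]
    gcongr
  have hre : ((n : ℝ) * (I * (phase r (h * I + t) - (y / n : ℝ) * (h * I + t)))).re =
      -((phase r (h * I + t)).im - y / n * h) * n := by
    rw [Complex.re_ofReal_mul, Complex.I_mul_re, Complex.sub_im, Complex.im_ofReal_mul]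
    simp only [Complex.add_im, Complex.im_ofReal_mul, Complex.I_im, Complex.ofReal_im]
    ring
  rw [walkIntegrand_eq hn y hdom, norm_mul, mul_comm, Complex.norm_exp, hre, ← neg_mul]
  gcongr
  · exact (norm_nonneg _).trans hHB
  · linarith

theorem mul_le_groupVelocityReal_sub {c ρ t₀ t : ℝ} (hr0 : 0 ≤ r) (hr : r ^ 2 < 1)
    (hc : c ≤ Real.cos t₀) (hρ : 0 ≤ ρ) (hρc : ρ ≤ c / 2) (ht₀ : -(π / 2) ≤ t₀) (hlo : t₀ + ρ ≤ t)
    (hhi : t ≤ π - t₀ - ρ) :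
    r * (1 - r ^ 2) * c / 4 * ρ ≤ groupVelocityReal r t - groupVelocityReal r t₀ := by
  have hsin := mul_le_sin_sub_sin hc hρ hρc ht₀ hlo hhi
  have hcρ : 0 ≤ c * ρ / 4 := by nlinarith
  have : 0 ≤ 1 - r ^ 2 := (sub_pos.2 hr).le
  calc r * (1 - r ^ 2) * c / 4 * ρ = r * (1 - r ^ 2) * (c * ρ / 4) := by ring
    _ ≤ r * (1 - r ^ 2) * (Real.sin t - Real.sin t₀) := by gcongr
    _ ≤ _ := mul_sin_sub_sin_le_groupVelocityReal_sub hr0 hr (by linarith)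

theorem groupVelocityReal_neg (r t : ℝ) : groupVelocityReal r (-t) = -groupVelocityReal r t := by
  simp only [groupVelocityReal, sinPhaseReal, Real.sin_neg, Real.cos_neg, mul_neg, neg_div]

theorem groupVelocityReal_sub_pi (r t : ℝ) :
    groupVelocityReal r (t - π) = -groupVelocityReal r t := by
  rw [← neg_sub, groupVelocityReal_neg, groupVelocityReal_pi_sub]

/-- The reflection `t ↦ t - π`, `t₀ ↦ -t₀` exchanges the two horizontal edges of the contour. -/
theorem mul_le_groupVelocityReal_sub' {c ρ t₀ t : ℝ} (hr0 : 0 ≤ r) (hr : r ^ 2 < 1)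
    (hc : c ≤ Real.cos t₀) (hρ : 0 ≤ ρ) (hρc : ρ ≤ c / 2) (ht₀ : t₀ ≤ π / 2) (hlo : π - t₀ + ρ ≤ t)
    (hhi : t ≤ 2 * π + t₀ - ρ) :
    r * (1 - r ^ 2) * c / 4 * ρ ≤ groupVelocityReal r t₀ - groupVelocityReal r t := by
  have h := mul_le_groupVelocityReal_sub (t₀ := -t₀) (t := t - π) hr0 hr (by rwa [Real.cos_neg]) hρ
    hρc (by linarith) (by linarith) (by linarith)
  rwa [groupVelocityReal_sub_pi, groupVelocityReal_neg, sub_neg_eq_add, neg_add_eq_sub] at h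

theorem exp_neg_mul_natCast_le {q : ℝ} (hq : 0 < q) {n : ℕ} (hn : n ≠ 0) :
    Real.exp (-(q * n)) ≤ 2 / q ^ 2 / (n * √n) := by
  have hn1 : (1 : ℝ) ≤ n := Nat.one_le_cast.2 (Nat.pos_of_ne_zero hn)
  have hsqrt : √(n : ℝ) ≤ n := Real.sqrt_le_iff.2 ⟨by positivity, le_self_pow₀ hn1 two_ne_zero⟩
  have hpow := pow_le_factorial_div_mul_exp hq (Nat.cast_nonneg n : (0 : ℝ) ≤ n) 2
  rw [Nat.factorial_two, Nat.cast_two] at hpow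
  rw [Real.exp_neg, inv_le_iff_one_le_mul₀ (Real.exp_pos _), div_mul_eq_mul_div,
    one_le_div (by positivity)]
  exact le_trans (by rw [sq]; gcongr) hpow

theorem norm_integral_walkIntegrand_horizontal_le {κ h l u : ℝ} {n : ℕ} {y : ℤ} (hr : r ^ 2 < 1)
    (hb : ∀ t ∈ Icc (-π) (3 * π), PhaseAmplitudeBound r H B (ball (t : ℂ) R)) (hh : |h| < R)
    (hκh : 0 < κ * h ^ 2 / 2) (hκ : (2 / R) ^ 3 * B * |h| ≤ κ / 2) (hn : n ≠ 0)
    (hl : -π ≤ l) (hlu : l ≤ u) (hu : u ≤ 3 * π)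
    (hv : ∀ t, l ≤ t → t ≤ u → κ * h ^ 2 ≤ (groupVelocityReal r t - y / n) * h) :
    ‖∫ t in l..u, walkIntegrand r H n y (h * I + t)‖ ≤
      4 * π * B * (2 / (κ * h ^ 2 / 2) ^ 2) / (n * √n) := by
  have hB : 0 ≤ B := (norm_nonneg _).trans
    (hb l ⟨hl, hlu.trans hu⟩ _ (mem_ball_self ((abs_nonneg h).trans_lt hh))).2.2
  calc ‖∫ t in l..u, walkIntegrand r H n y (h * I + t)‖
      ≤ B * Real.exp (-(κ * h ^ 2 / 2 * n)) * |u - l| := by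
        refine intervalIntegral.norm_integral_le_of_norm_le_const fun t ht => ?_
        rw [uIoc_of_le hlu] at ht
        exact norm_walkIntegrand_horizontal_le hr
          (hb t ⟨hl.trans ht.1.le, ht.2.trans hu⟩) hh hκ hn (hv t ht.1.le ht.2)
    _ ≤ B * (2 / (κ * h ^ 2 / 2) ^ 2 / (n * √n)) * (4 * π) := by
        rw [abs_of_nonneg (sub_nonneg.2 hlu)]
        gcongr
        · exact exp_neg_mul_natCast_le hκh hn
        · linarith
    _ = _ := by ring

theorem norm_one_add_I_le : ‖1 + I‖ ≤ 2 := (norm_add_le _ _).trans (by norm_num)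

theorem norm_one_sub_I_le : ‖1 - I‖ ≤ 2 := (norm_sub_le _ _).trans (by norm_num)

theorem exists_contour_radius {δ R B c m : ℝ} (hδ : 0 < δ) (hR : 0 < R) (hc : 0 < c) (hm : 0 < m) :
    ∃ ρ > 0, ρ < δ ∧ 2 * ρ < R ∧ ρ ≤ c / 2 ∧ 2 ^ 3 * ((2 / R) ^ 3 * B) * ρ ≤ m := by
  have hlt {f : ℝ → ℝ} (hf : Continuous f) {M : ℝ} (h : f 0 < M) : ∀ᶠ ρ in 𝓝[>] 0, f ρ < M :=
    (hf.tendsto 0).mono_left nhdsWithin_le_nhds |>.eventually_lt_const h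
  obtain ⟨ρ, hρ, h₁, h₂, h₃, h₄⟩ := (eventually_mem_nhdsWithin.and <|
    (hlt continuous_id hδ).and <| (hlt (f := (2 * ·)) (M := R) (by fun_prop) (by simpa)).and <|
    (hlt continuous_id (half_pos hc)).and <|
    hlt (f := (2 ^ 3 * ((2 / R) ^ 3 * B) * ·)) (M := m) (by fun_prop) (by simpa)).exists
  exact ⟨ρ, hρ, h₁, h₂, h₃.le, h₄.le⟩

theorem abs_le_pi_div_two_sub_cos {t : ℝ} (ht : |t| ≤ π / 2) : |t| ≤ π / 2 - Real.cos t := by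
  have := Real.sin_le (sub_nonneg.2 ht)
  rw [Real.sin_pi_div_two_sub, Real.cos_abs] at this
  linarith

theorem norm_integral_walkIntegrand_upper_add_lower_le {c ρ t₀ : ℝ} {n : ℕ} {y : ℤ} (hr0 : 0 < r)
    (hr : r ^ 2 < 1) (hb : ∀ t ∈ Icc (-π) (3 * π), PhaseAmplitudeBound r H B (ball (t : ℂ) R))
    (hρ : 0 < ρ) (hρR : ρ < R) (hρc : ρ ≤ c / 2)
    (hρB : (2 / R) ^ 3 * B * ρ ≤ r * (1 - r ^ 2) * c / 4 / 2) (hn : n ≠ 0) (ht₀ : |t₀| ≤ π / 2)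
    (hct : c ≤ Real.cos t₀) (hv : groupVelocityReal r t₀ = y / n) :
    ‖∫ t in (t₀ + ρ)..(π - t₀ - ρ), walkIntegrand r H n y (ρ * I + t)‖ +
      ‖∫ t in (π - t₀ + ρ)..(2 * π + t₀ - ρ), walkIntegrand r H n y (-ρ * I + t)‖ ≤
      2 * (4 * π * B * (2 / (r * (1 - r ^ 2) * c / 4 * ρ ^ 2 / 2) ^ 2)) / (n * √n) := by
  have hκ : 0 < r * (1 - r ^ 2) * c / 4 * ρ ^ 2 / 2 := by
    have : 0 < c := by linarith
    have : 0 < 1 - r ^ 2 := sub_pos.2 hr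
    positivity
  obtain ⟨hlo, hhi⟩ := abs_le.1 ht₀
  obtain ⟨hlo', hhi'⟩ := abs_le.1 ((abs_le_pi_div_two_sub_cos ht₀).trans
    (by linarith : _ ≤ π / 2 - ρ))
  have hupper := norm_integral_walkIntegrand_horizontal_le (y := y) (l := t₀ + ρ)
    (u := π - t₀ - ρ) hr hb (by rwa [abs_of_pos hρ]) hκ (by rwa [abs_of_pos hρ]) hn (by linarith)
    (by linarith) (by linarith) fun t hl hu => by
      have := mul_le_groupVelocityReal_sub hr0.le hr hct hρ.le hρc hlo hl hu
      rw [← hv, sq ρ, ← mul_assoc]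
      gcongr
  have hlower := norm_integral_walkIntegrand_horizontal_le (y := y) (h := -ρ) (l := π - t₀ + ρ)
    (u := 2 * π + t₀ - ρ) hr hb (by rwa [abs_neg, abs_of_pos hρ]) (by rwa [neg_sq])
    (by rwa [abs_neg, abs_of_pos hρ]) hn (by linarith) (by linarith) (by linarith)
    fun t hl hu => by
      have := mul_le_groupVelocityReal_sub' hr0.le hr hct hρ.le hρc hhi hl hu
      rw [← hv, mul_neg, ← neg_mul, neg_sub, neg_sq, sq ρ, ← mul_assoc]
      gcongr
  rw [neg_sq, Complex.ofReal_neg] at hlower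
  exact (add_le_add hupper hlower).trans_eq (by ring)

/-- Of the four edges of the deformed contour the two oblique ones carry the saddles, while the
integrand is exponentially small on the two horizontal ones. -/
theorem exists_norm_integral_walkIntegrand_sub_le_of_radius {c δ ρ : ℝ} (hr0 : 0 < r)
    (hr : r ^ 2 < 1) (hH : DifferentiableOn ℂ H (phaseDomain r))
    (hper : Function.Periodic H (2 * π)) (hstrip : horizontalStrip δ ⊆ phaseDomain r)
    (hb : ∀ t ∈ Icc (-π) (3 * π), PhaseAmplitudeBound r H B (ball (t : ℂ) R)) (hB : 0 ≤ B)
    (hR : 0 < R) (hc : 0 < c) (hρ : 0 < ρ) (hρδ : ρ < δ) (hρR : 2 * ρ < R) (hρc : ρ ≤ c / 2)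
    (hρB : 2 ^ 3 * ((2 / R) ^ 3 * B) * ρ ≤ r * (1 - r ^ 2) * c / 2) :
    ∃ C : ℝ, ∀ (n : ℕ) (y : ℤ) (t₀ : ℝ), n ≠ 0 → |t₀| ≤ π / 2 → c ≤ Real.cos t₀ →
      groupVelocityReal r t₀ = y / n →
      ‖(∫ t in (-π)..π, walkIntegrand r H n y t) - (√(π / (n * phaseCurvature r t₀)) : ℝ) *
        ((1 + I) * walkIntegrand r H n y t₀ + (1 - I) * walkIntegrand r H n y (π - t₀ : ℝ))‖ ≤
        C / (n * √n) := by
  have hm₀ : 0 < r * (1 - r ^ 2) * c := mul_pos (mul_pos hr0 (sub_pos.2 hr)) hc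
  have hsaddle {d : ℂ} (hd : ‖d‖ ≤ 2) := exists_norm_integral_walkIntegrand_saddle_sub_le hr hH hm₀
    hρ ((by gcongr : ‖d‖ * ρ ≤ 2 * ρ).trans_lt hρR) (le_trans (by gcongr) hρB)
  obtain ⟨C₁, hC₁⟩ := hsaddle norm_one_add_I_le
  obtain ⟨C₂, hC₂⟩ := hsaddle norm_one_sub_I_le
  refine ⟨2 * C₁ + 2 * C₂ + 2 * (4 * π * B * (2 / (r * (1 - r ^ 2) * c / 4 * ρ ^ 2 / 2) ^ 2)),
    fun n y t₀ hn ht₀ hct hv => ?_⟩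
  obtain ⟨hlo, hhi⟩ := abs_le.1 ht₀
  have hm := mul_le_phaseCurvature hr0.le hr hc.le hct
  have h₁ := hC₁ n y t₀ (phaseCurvature r t₀) hn (hb _ ⟨by linarith, by linarith⟩) hv
    (by linear_combination (phaseCurvature r t₀ / 2 : ℂ) * (I + 2) * Complex.I_sq) hm
  have h₂ := hC₂ n y (π - t₀) (phaseCurvature r t₀) hn (hb _ ⟨by linarith, by linarith⟩)
    (by rwa [groupVelocityReal_pi_sub])
    (by rw [phaseCurvature_pi_sub]; push_cast
        linear_combination (-(phaseCurvature r t₀) / 2 : ℂ) * (I - 2) * Complex.I_sq) hm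
  have h₃ := norm_integral_walkIntegrand_upper_add_lower_le hr0 hr hb hρ (by linarith) hρc
    (by linarith) hn ht₀ hct hv
  rw [integral_eq_integral_polygon hρ.le hρδ t₀
    ((differentiableOn_walkIntegrand hH n y).mono hstrip) (walkIntegrand_periodic hper n y)]
  rw [show ∀ d₁ d₂ I₁ I₂ I₃ I₄ Q F₁ F₂ : ℂ, d₁ * I₁ + I₂ + d₂ * I₃ + I₄ - Q * (d₁ * F₁ + d₂ * F₂) =
    d₁ * (I₁ - Q * F₁) + d₂ * (I₃ - Q * F₂) + I₂ + I₄ by intros; ring]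
  refine norm_add₄_le.trans ?_
  rw [norm_mul, norm_mul, add_assoc]
  have h₁₂ := add_le_add (mul_le_mul norm_one_add_I_le h₁ (norm_nonneg _) zero_le_two)
    (mul_le_mul norm_one_sub_I_le h₂ (norm_nonneg _) zero_le_two)
  exact (add_le_add h₁₂ h₃).trans_eq (by ring)

theorem exists_norm_integral_walkIntegrand_sub_le {c : ℝ} (hr0 : 0 < r) (hr : r ^ 2 < 1)
    (hH : DifferentiableOn ℂ H (phaseDomain r)) (hper : Function.Periodic H (2 * π)) (hc : 0 < c) :
    ∃ C : ℝ, ∀ (n : ℕ) (y : ℤ) (t₀ : ℝ), n ≠ 0 → |t₀| ≤ π / 2 → c ≤ Real.cos t₀ →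
      groupVelocityReal r t₀ = y / n →
      ‖(∫ t in (-π)..π, walkIntegrand r H n y t) - (√(π / (n * phaseCurvature r t₀)) : ℝ) *
        ((1 + I) * walkIntegrand r H n y t₀ + (1 - I) * walkIntegrand r H n y (π - t₀ : ℝ))‖ ≤
        C / (n * √n) := by
  obtain ⟨δ, hδ, hstrip⟩ := exists_horizontalStrip_subset_phaseDomain hr
  obtain ⟨R, hR, B, hb⟩ := exists_phaseAmplitudeBound hr hH.continuousOn
  have hB : 0 ≤ B := (norm_nonneg _).trans
    (hb 0 ⟨by linarith [Real.pi_pos], by positivity⟩ _ (mem_ball_self hR)).2.2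
  have : 0 < 1 - r ^ 2 := sub_pos.2 hr
  obtain ⟨ρ, hρ, hρδ, hρR, hρc, hρB⟩ := exists_contour_radius (B := B) hδ hR hc
    (by positivity : 0 < r * (1 - r ^ 2) * c / 2)
  exact exists_norm_integral_walkIntegrand_sub_le_of_radius hr0 hr hH hper hstrip hb hB hR hc hρ hρδ
    hρR hρc hρB

end OscillatoryIntegral

/-! ### Fourier representation of the walk -/

section FourierRepresentation

variable {a b ω : ℂ}

/-- The matrix `P` of the walk. -/
def coinLeft (a b : ℂ) : ℂ × ℂ →L[ℂ] ℂ × ℂ :=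
  (a • ContinuousLinearMap.fst ℂ ℂ ℂ).prod (-conj b • ContinuousLinearMap.fst ℂ ℂ ℂ)

/-- The matrix `Q` of the walk. -/
def coinRight (a b : ℂ) : ℂ × ℂ →L[ℂ] ℂ × ℂ :=
  (b • ContinuousLinearMap.snd ℂ ℂ ℂ).prod (conj a • ContinuousLinearMap.snd ℂ ℂ ℂ)

/-- The symbol `A(e^{iw}) = e^{-iw} P + e^{iw} Q` of the walk, for complex quasi-momentum `w`. -/
def symbol (a b w : ℂ) : ℂ × ℂ →L[ℂ] ℂ × ℂ :=
  Complex.exp (-(I * w)) • coinLeft a b + Complex.exp (I * w) • coinRight a b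

/-- The functional `⟨·, ψ⟩`, as a continuous linear map. -/
def innCLeft (ψ : ℂ × ℂ) : ℂ × ℂ →L[ℂ] ℂ :=
  conj ψ.1 • ContinuousLinearMap.fst ℂ ℂ ℂ + conj ψ.2 • ContinuousLinearMap.snd ℂ ℂ ℂ

theorem innCLeft_apply (ψ u : ℂ × ℂ) : innCLeft ψ u = innC u ψ := by
  simp only [innCLeft, innC, add_apply, smul_apply,
    ContinuousLinearMap.coe_fst', ContinuousLinearMap.coe_snd', smul_eq_mul, mul_comm]

theorem qwStep_apply (a b : ℂ) (f : ℤ → ℂ × ℂ) (x : ℤ) :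
    qwStep a b f x = coinLeft a b (f (x + 1)) + coinRight a b (f (x - 1)) := rfl

theorem coinLeft_apply (a b : ℂ) (u : ℂ × ℂ) : coinLeft a b u = (a * u.1, -conj b * u.1) := rfl

theorem coinRight_apply (a b : ℂ) (u : ℂ × ℂ) : coinRight a b u = (b * u.2, conj a * u.2) := rfl

theorem coinLeft_mul_left (hω : conj ω * ω = 1) :
    coinLeft (a * ω) b = ω • coinLeft a (ω * b) := by
  refine ContinuousLinearMap.ext fun u => ?_
  rw [smul_apply, coinLeft_apply, coinLeft_apply, Prod.smul_mk, smul_eq_mul, smul_eq_mul, map_mul]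
  congr 1
  · ring
  · linear_combination (conj b * u.1) * hω

theorem coinRight_mul_left (hω : conj ω * ω = 1) :
    coinRight (a * ω) b = conj ω • coinRight a (ω * b) := by
  refine ContinuousLinearMap.ext fun u => ?_
  rw [smul_apply, coinRight_apply, coinRight_apply, Prod.smul_mk, smul_eq_mul, smul_eq_mul, map_mul]
  congr 1
  · linear_combination (-(b * u.2)) * hω
  · ring

/-- A gauge transformation: the phase of `a` can be moved into `b`. -/
theorem qwStep_iterate_mul_left (hω : conj ω * ω = 1) (φ : ℂ × ℂ) (n : ℕ) (y : ℤ) :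
    (qwStep (a * ω) b)^[n] (qwDelta φ) y =
      ω ^ (-y) • (qwStep a (ω * b))^[n] (qwDelta φ) y := by
  have hω0 : ω ≠ 0 := right_ne_zero_of_mul_eq_one hω
  induction n generalizing y with
  | zero =>
    rcases eq_or_ne y 0 with rfl | hy
    · simp
    · simp [qwDelta, hy]
  | succ n ih =>
    rw [Function.iterate_succ_apply', Function.iterate_succ_apply', qwStep_apply, qwStep_apply, ih,
      ih, coinLeft_mul_left hω, coinRight_mul_left hω, smul_add]
    simp only [map_smul, smul_apply, smul_smul]
    congr 2
    · rw [neg_add, zpow_add₀ hω0, zpow_neg_one, mul_assoc, inv_mul_cancel₀ hω0, mul_one]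
    · rw [neg_sub, sub_eq_neg_add, zpow_add₀ hω0, zpow_one, mul_assoc, mul_comm ω, hω, mul_one]

/-- The unnormalised Fourier coefficient `∫_{-π}^{π} e^{-iyt} F(t) dt`. -/
def fourierIntegral (F : ℝ → ℂ × ℂ) (y : ℤ) : ℂ × ℂ :=
  ∫ t in (-π)..π, Complex.exp (-(I * y * t)) • F t

theorem integral_exp_neg_I_mul (y : ℤ) :
    ∫ t in (-π)..π, Complex.exp (-(I * y * (t : ℝ))) = if y = 0 then 2 * (π : ℂ) else 0 := by
  split_ifs with h
  · simp [h, two_mul]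
  · have hc : -(I * (y : ℂ)) ≠ 0 := by simpa using h
    simp only [← neg_mul (I * (y : ℂ))]
    rw [integral_exp_mul_complex hc, div_eq_zero_iff, sub_eq_zero,
      Complex.exp_eq_exp_iff_exists_int]
    exact Or.inl ⟨-y, by push_cast; ring⟩

theorem fourierIntegral_const (φ : ℂ × ℂ) (y : ℤ) :
    fourierIntegral (fun _ => φ) y = (2 * (π : ℂ)) • qwDelta φ y := by
  rw [fourierIntegral, intervalIntegral.integral_smul_const, integral_exp_neg_I_mul, ite_smul,
    zero_smul, qwDelta, smul_ite, smul_zero]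

theorem fourierIntegral_symbol (a b : ℂ) {F : ℝ → ℂ × ℂ} (hF : Continuous F) (y : ℤ) :
    fourierIntegral (fun t => symbol a b t (F t)) y =
      coinLeft a b (fourierIntegral F (y + 1)) + coinRight a b (fourierIntegral F (y - 1)) := by
  have hint (k : ℤ) : IntervalIntegrable (fun t : ℝ => Complex.exp (-(I * k * t)) • F t) volume
      (-π) π := Continuous.intervalIntegrable (by fun_prop) _ _
  rw [fourierIntegral, fourierIntegral, fourierIntegral,
    ← ContinuousLinearMap.intervalIntegral_comp_comm _ (hint _),
    ← ContinuousLinearMap.intervalIntegral_comp_comm _ (hint _),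
    ← intervalIntegral.integral_add (Continuous.intervalIntegrable (by fun_prop) _ _)
      (Continuous.intervalIntegrable (by fun_prop) _ _)]
  refine intervalIntegral.integral_congr fun t _ => ?_
  simp only [symbol, map_smul, add_apply, smul_apply,
    smul_add, smul_smul, ← Complex.exp_add]
  congr 3 <;> push_cast <;> ring

theorem continuous_symbol_pow (a b : ℂ) (φ : ℂ × ℂ) (n : ℕ) :
    Continuous fun t : ℝ => (symbol a b t ^ n) φ := by
  unfold symbol
  fun_prop

theorem qwStep_iterate_eq_fourierIntegral (a b : ℂ) (φ : ℂ × ℂ) (n : ℕ) (y : ℤ) :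
    (qwStep a b)^[n] (qwDelta φ) y =
      (2 * (π : ℂ))⁻¹ • fourierIntegral (fun t => (symbol a b t ^ n) φ) y := by
  induction n generalizing y with
  | zero =>
    have hπ : 2 * (π : ℂ) ≠ 0 := by simp
    simp only [pow_zero, one_apply_eq_self, Function.iterate_zero, id]
    rw [fourierIntegral_const, inv_smul_smul₀ hπ]
  | succ n ih =>
    simp only [pow_succ', mul_apply_eq_comp]
    rw [fourierIntegral_symbol a b (continuous_symbol_pow a b φ n),
      Function.iterate_succ_apply', qwStep_apply, ih, ih, map_smul, map_smul, smul_add]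

end FourierRepresentation

/-! ### Spectral decomposition of the symbol -/

theorem smul_iterate_eq_of_quadratic {A M : Type*} [CommRing A] [AddCommGroup M] [Module A M]
    {T : M →ₗ[A] M} {x : M} {l l' : A} (hT : T (T x) = (l + l') • T x - (l * l') • x) (n : ℕ) :
    (l - l') • T^[n] x = l ^ n • (T x - l' • x) - l' ^ n • (T x - l • x) := by
  induction n with
  | zero => simp only [Function.iterate_zero, id, pow_zero, one_smul]; module
  | succ n ih =>
    rw [Function.iterate_succ_apply', ← map_smul, ih]
    simp only [map_sub, map_smul, hT]
    module

section SpectralProjection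

variable {r : ℝ} {β w : ℂ} {H : ℂ → ℂ}

/-- The spectral projection `(A - e^{-iμ}) / (e^{iμ} - e^{-iμ})` of the symbol `A` onto the
`e^{iμ}`-eigenspace. -/
def spectralProjection (r : ℝ) (β w : ℂ) : ℂ × ℂ →L[ℂ] ℂ × ℂ :=
  (2 * I * sinPhase r w)⁻¹ • (symbol r β w - expNegPhase r w • 1)

/-- The amplitude `⟨Π(w)φ, ψ⟩` of the oscillatory integral, with `Π` the spectral projection. -/
def amplitude (r : ℝ) (β : ℂ) (φ ψ : ℂ × ℂ) (w : ℂ) : ℂ :=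
  innCLeft ψ (spectralProjection r β w φ)

theorem symbol_apply (u : ℂ × ℂ) :
    symbol r β w u = (r * Complex.exp (-(I * w)) * u.1 + β * Complex.exp (I * w) * u.2,
      -conj β * Complex.exp (-(I * w)) * u.1 + r * Complex.exp (I * w) * u.2) := by
  rw [symbol, add_apply, smul_apply, smul_apply, coinLeft_apply, coinRight_apply,
    Complex.conj_ofReal]
  ext <;> simp only [Prod.fst_add, Prod.snd_add, Prod.smul_fst, Prod.smul_snd, smul_eq_mul] <;> ring

theorem expPhase_sub_expNegPhase (r : ℝ) (w : ℂ) :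
    expPhase r w - expNegPhase r w = 2 * I * sinPhase r w := by
  rw [expPhase, expNegPhase]; ring

theorem expNegPhase_add_pi (r : ℝ) (w : ℂ) : expNegPhase r (w + π) = -expPhase r w := by
  rw [expNegPhase, sinPhase_add_pi, Complex.cos_add_pi, expPhase]; ring

theorem smul_spectralProjection (hw : sinPhase r w ≠ 0) (φ : ℂ × ℂ) :
    (expPhase r w - expNegPhase r w) • spectralProjection r β w φ =
      symbol r β w φ - expNegPhase r w • φ := by
  have hD : 2 * I * sinPhase r w ≠ 0 := by simp [hw]
  rw [expPhase_sub_expNegPhase, spectralProjection, smul_apply, smul_inv_smul₀ hD, sub_apply,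
    smul_apply, one_apply_eq_self]

/-- Cayley–Hamilton: the symbol has determinant `1 = e^{iμ} e^{-iμ}` and trace
`2r cos w = e^{iμ} + e^{-iμ}`. -/
theorem symbol_symbol (hβ : ‖β‖ ^ 2 = 1 - r ^ 2) (u : ℂ × ℂ) :
    symbol r β w (symbol r β w u) = (expPhase r w + expNegPhase r w) • symbol r β w u -
      (expPhase r w * expNegPhase r w) • u := by
  have hββ : β * conj β = 1 - (r : ℂ) ^ 2 := by
    rw [Complex.mul_conj, Complex.normSq_eq_norm_sq, hβ]; push_cast; rfl
  have hdet : expPhase r w * expNegPhase r w = 1 := by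
    rw [expPhase, expNegPhase]
    linear_combination sq_sinPhase r w - sinPhase r w ^ 2 * Complex.I_sq
  have htrace : expPhase r w + expNegPhase r w =
      r * (Complex.exp (-(I * w)) + Complex.exp (I * w)) := by
    rw [expPhase, expNegPhase, Complex.cos, neg_mul, mul_comm w I]; ring
  have hexp : Complex.exp (-(I * w)) * Complex.exp (I * w) = 1 := by
    rw [← Complex.exp_add, neg_add_cancel, Complex.exp_zero]
  rw [hdet, htrace, one_smul, symbol_apply, symbol_apply]
  ext <;> simp only [Prod.fst_sub, Prod.snd_sub, Prod.smul_fst, Prod.smul_snd, smul_eq_mul]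
  · linear_combination -u.1 * hexp -
      u.1 * Complex.exp (-(I * w)) * Complex.exp (I * w) * hββ
  · linear_combination -u.2 * hexp -
      u.2 * Complex.exp (-(I * w)) * Complex.exp (I * w) * hββ

theorem symbol_pow_apply (hβ : ‖β‖ ^ 2 = 1 - r ^ 2) (hw : sinPhase r w ≠ 0) (φ : ℂ × ℂ) (n : ℕ) :
    (symbol r β w ^ n) φ = expPhase r w ^ n • spectralProjection r β w φ +
      expNegPhase r w ^ n • (φ - spectralProjection r β w φ) := by
  have hD : expPhase r w - expNegPhase r w ≠ 0 := by simp [expPhase_sub_expNegPhase, hw]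
  have hpow := smul_iterate_eq_of_quadratic (T := (symbol r β w).toLinearMap)
    (symbol_symbol hβ φ) n
  have hproj := smul_spectralProjection (β := β) hw φ
  have hcompl : (expPhase r w - expNegPhase r w) • (φ - spectralProjection r β w φ) =
      -(symbol r β w φ - expPhase r w • φ) := by
    rw [smul_sub, hproj]; module
  refine smul_right_injective _ hD ?_
  simp only
  rw [smul_add, smul_comm, hproj, smul_comm, hcompl, smul_neg, ← sub_eq_add_neg,
    FunLike.coe_pow_eq_iterate]
  exact hpow

theorem symbol_add_pi (r : ℝ) (β w : ℂ) : symbol r β (w + π) = -symbol r β w := by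
  rw [symbol, mul_add, neg_add, Complex.exp_add, Complex.exp_add, mul_comm I (π : ℂ),
    Complex.exp_neg (π * I), Complex.exp_pi_mul_I, symbol]
  module

theorem spectralProjection_add_pi (hw : sinPhase r w ≠ 0) (φ : ℂ × ℂ) :
    spectralProjection r β (w + π) φ = φ - spectralProjection r β w φ := by
  have hD : expPhase r w - expNegPhase r w ≠ 0 := by simp [expPhase_sub_expNegPhase, hw]
  refine smul_right_injective _ hD ?_
  have hshift := smul_spectralProjection (β := β) (sinPhase_add_pi r w ▸ hw) φ
  rw [expPhase_add_pi, expNegPhase_add_pi, symbol_add_pi] at hshift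
  simp only
  rw [smul_sub, smul_spectralProjection hw, show expPhase r w - expNegPhase r w =
    -expNegPhase r w - -expPhase r w by ring, hshift, neg_apply]
  module

theorem amplitude_add_pi (hw : sinPhase r w ≠ 0) (φ ψ : ℂ × ℂ) :
    amplitude r β φ ψ (w + π) = innC φ ψ - amplitude r β φ ψ w := by
  rw [amplitude, spectralProjection_add_pi hw, map_sub, innCLeft_apply ψ φ, amplitude]

theorem differentiableOn_amplitude (r : ℝ) (β : ℂ) (φ ψ : ℂ × ℂ) :
    DifferentiableOn ℂ (amplitude r β φ ψ) (phaseDomain r) := by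
  have hS : DifferentiableOn ℂ (sinPhase r) (phaseDomain r) := fun w hw =>
    (hasDerivAt_sinPhase hw).differentiableAt.differentiableWithinAt
  have hS' : DifferentiableOn ℂ (fun w => (2 * I * sinPhase r w)⁻¹) (phaseDomain r) :=
    (hS.const_mul _).inv fun w hw => by simp [sinPhase_ne_zero hw]
  unfold amplitude spectralProjection symbol expNegPhase
  fun_prop

theorem amplitude_periodic (r : ℝ) (β : ℂ) (φ ψ : ℂ × ℂ) :
    Function.Periodic (amplitude r β φ ψ) (2 * π) := fun w => by
  have hw : w + 2 * π = w + π + π := by ring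
  have hsymbol : symbol r β (w + 2 * π) = symbol r β w := by
    rw [hw, symbol_add_pi, symbol_add_pi, neg_neg]
  have hexp : expNegPhase r (w + 2 * π) = expNegPhase r w := by
    rw [hw, expNegPhase_add_pi, expPhase_add_pi, neg_neg]
  rw [amplitude, spectralProjection, hsymbol, hexp, sinPhase_add_two_pi, amplitude,
    spectralProjection]

theorem walkIntegrand_add_pi (r : ℝ) (H : ℂ → ℂ) (n : ℕ) (y : ℤ) (w : ℂ) :
    walkIntegrand r H n y (w + π) = (-1) ^ ((n : ℤ) + y) *
      (expNegPhase r w ^ n * Complex.exp (-(I * y * w)) * H (w + π)) := by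
  have hexp : Complex.exp (-(I * y * (w + π))) = (-1) ^ y * Complex.exp (-(I * y * w)) := by
    rw [show -(I * y * (w + π)) = y * (π * I) + -(I * y * w) - y * (2 * π * I) by ring,
      Complex.exp_periodic.sub_int_mul_eq, Complex.exp_add, Complex.exp_int_mul,
      Complex.exp_pi_mul_I]
  rw [walkIntegrand, expPhase_add_pi, hexp, neg_pow, zpow_add₀ (by norm_num), zpow_natCast]
  ring

/-- The `e^{-iμ}`-branch is the `π`-shift of the `e^{iμ}`-branch; this is where the parity factor
comes from. -/
theorem exp_mul_innCLeft_symbol_pow (hβ : ‖β‖ ^ 2 = 1 - r ^ 2) (hw : sinPhase r w ≠ 0)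
    (φ ψ : ℂ × ℂ) (n : ℕ) (y : ℤ) :
    Complex.exp (-(I * y * w)) * innCLeft ψ ((symbol r β w ^ n) φ) =
      walkIntegrand r (amplitude r β φ ψ) n y w +
        (-1) ^ ((n : ℤ) + y) * walkIntegrand r (amplitude r β φ ψ) n y (w + π) := by
  have hsign : ((-1 : ℂ) ^ ((n : ℤ) + y)) * (-1) ^ ((n : ℤ) + y) = 1 := by
    rw [← mul_zpow, neg_one_mul, neg_neg, one_zpow]
  rw [walkIntegrand_add_pi, ← mul_assoc, hsign, one_mul, amplitude_add_pi hw, walkIntegrand,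
    symbol_pow_apply hβ hw, map_add, map_smul, map_smul, map_sub, innCLeft_apply ψ φ, amplitude,
    smul_eq_mul, smul_eq_mul]
  ring

theorem integral_walkIntegrand_add_pi (hper : Function.Periodic H (2 * π)) (n : ℕ) (y : ℤ) :
    ∫ t in (-π)..π, walkIntegrand r H n y (t + π) = ∫ t in (-π)..π, walkIntegrand r H n y t := by
  have hperiodic : Function.Periodic (fun t : ℝ => walkIntegrand r H n y t) (2 * π) := fun t => by
    simpa using walkIntegrand_periodic hper n y t
  have hshift := intervalIntegral.integral_comp_add_right (a := -π) (b := π)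
    (fun t : ℝ => walkIntegrand r H n y t) π
  push_cast at hshift
  rw [hshift, neg_add_cancel, ← two_mul]
  simpa [two_mul] using hperiodic.intervalIntegral_add_eq 0 (-π)

theorem innC_qwStep_iterate (hr : r ^ 2 < 1) (hβ : ‖β‖ ^ 2 = 1 - r ^ 2) (φ ψ : ℂ × ℂ) (n : ℕ)
    (y : ℤ) :
    innC ((qwStep r β)^[n] (qwDelta φ) y) ψ = (1 + (-1) ^ ((n : ℤ) + y)) *
      ((2 * (π : ℂ))⁻¹ * ∫ t in (-π)..π, walkIntegrand r (amplitude r β φ ψ) n y t) := by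
  have hW := differentiableOn_walkIntegrand (differentiableOn_amplitude r β φ ψ) n y
  have hcont {f : ℝ → ℂ} (hf : Continuous f) (him : ∀ t, (f t).im = 0) :
      Continuous fun t => walkIntegrand r (amplitude r β φ ψ) n y (f t) :=
    hW.continuousOn.comp_continuous hf fun t => by simpa [phaseDomain, him t] using hr
  have hint : IntervalIntegrable
      (fun t : ℝ => Complex.exp (-(I * y * t)) • (symbol r β t ^ n) φ) volume (-π) π :=
    Continuous.intervalIntegrable
      ((by fun_prop : Continuous fun t : ℝ => Complex.exp (-(I * y * t))).smul
        (continuous_symbol_pow r β φ n)) _ _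
  rw [qwStep_iterate_eq_fourierIntegral, ← innCLeft_apply, map_smul, smul_eq_mul, fourierIntegral,
    ← ContinuousLinearMap.intervalIntegral_comp_comm _ hint]
  simp only [map_smul, smul_eq_mul, exp_mul_innCLeft_symbol_pow hβ
    (sinPhase_ne_zero (ofReal_mem_phaseDomain hr _))]
  rw [intervalIntegral.integral_add, intervalIntegral.integral_const_mul,
    integral_walkIntegrand_add_pi (amplitude_periodic r β φ ψ)]
  · ring
  · exact (hcont (by fun_prop) fun _ => by simp).intervalIntegrable _ _
  · exact ((hcont (by fun_prop) fun _ => by simp).const_mul _).intervalIntegrable _ _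

end SpectralProjection

/-! ### The amplitude on the real axis -/

section EigenvectorFrame

variable {r : ℝ} {β w : ℂ} {u : ℂ × ℂ}

theorem symbol_Jmap (r : ℝ) (β : ℂ) (t : ℝ) (u : ℂ × ℂ) :
    symbol r β t (Jmap u) = Jmap (symbol r β t u) := by
  have hconj : conj (Complex.exp (I * t)) = Complex.exp (-(I * t)) := by
    rw [← Complex.exp_conj, map_mul, Complex.conj_I, Complex.conj_ofReal, neg_mul]
  have hconj' : conj (Complex.exp (-(I * t))) = Complex.exp (I * t) := by
    rw [← hconj, Complex.conj_conj]
  rw [symbol_apply, symbol_apply, Jmap, Jmap]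
  simp only [map_add, map_mul, map_neg, hconj, hconj', Complex.conj_ofReal, Complex.conj_conj]
  congr 1 <;> ring

theorem Jmap_smul (c : ℂ) (u : ℂ × ℂ) : Jmap (c • u) = conj c • Jmap u := by
  simp [Jmap]

theorem eq_innC_smul_add_innC_Jmap_smul (hu : nsq u = 1) (φ : ℂ × ℂ) :
    φ = innC φ u • u + innC φ (Jmap u) • Jmap u := by
  have hu' : u.1 * conj u.1 + u.2 * conj u.2 = 1 := by
    simp only [Complex.mul_conj, Complex.normSq_eq_norm_sq]
    exact_mod_cast hu
  ext <;> simp only [innC, Jmap, map_neg, Complex.conj_conj, Prod.fst_add, Prod.snd_add,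
    Prod.smul_fst, Prod.smul_snd, smul_eq_mul]
  · linear_combination (-φ.1) * hu'
  · linear_combination (-φ.2) * hu'

theorem spectralProjection_eq_self (hw : sinPhase r w ≠ 0)
    (hu : symbol r β w u = expPhase r w • u) : spectralProjection r β w u = u := by
  have hD : expPhase r w - expNegPhase r w ≠ 0 := by simp [expPhase_sub_expNegPhase, hw]
  refine smul_right_injective _ hD ?_
  simp only
  rw [smul_spectralProjection hw, hu, sub_smul]

theorem spectralProjection_eq_zero (hu : symbol r β w u = expNegPhase r w • u) :
    spectralProjection r β w u = 0 := by
  rw [spectralProjection, smul_apply, sub_apply, hu, smul_apply, one_apply_eq_self, sub_self,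
    smul_zero]

theorem conj_expPhase_ofReal (hr : r ^ 2 < 1) (t : ℝ) :
    conj (expPhase r t) = expNegPhase r t := by
  rw [expPhase, expNegPhase, sinPhase_ofReal hr, ← Complex.ofReal_cos]
  simp only [map_add, map_mul, Complex.conj_ofReal, Complex.conj_I]
  ring

theorem spectralProjection_apply_of_eigenvector (hr : r ^ 2 < 1) {t : ℝ}
    (hu : nsq u = 1) (hsymbol : symbol r β t u = expPhase r t • u) (φ : ℂ × ℂ) :
    spectralProjection r β t φ = innC φ u • u := by
  have hJ : symbol r β t (Jmap u) = expNegPhase r t • Jmap u := by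
    rw [symbol_Jmap, hsymbol, Jmap_smul, conj_expPhase_ofReal hr]
  conv_lhs => rw [eq_innC_smul_add_innC_Jmap_smul hu φ]
  rw [map_add, map_smul, map_smul, spectralProjection_eq_zero hJ, smul_zero, add_zero,
    spectralProjection_eq_self (sinPhase_ne_zero (ofReal_mem_phaseDomain hr t)) hsymbol]

end EigenvectorFrame

section Eigenvector

variable {a b : ℂ}

theorem phit_exp (t : ℝ) : phit (Complex.exp (I * t)) = Real.cos t := by
  rw [phit, ← Complex.exp_neg, mul_comm, ← neg_mul, ← Complex.cos, ← Complex.ofReal_cos,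
    Complex.ofReal_re]

theorem lamS_exp (hr : ‖a‖ ^ 2 < 1) (t : ℝ) : lamS a (Complex.exp (I * t)) = expPhase ‖a‖ t := by
  rw [lamS, phit_exp, expPhase, sinPhase_ofReal hr, sinPhaseReal, mul_pow]
  push_cast
  rfl

theorem lamS_exp_sub (hr : ‖a‖ ^ 2 < 1) (t : ℝ) :
    lamS a (Complex.exp (I * t)) - ‖a‖ * conj (Complex.exp (I * t)) =
      I * (sinPhaseReal ‖a‖ t + ‖a‖ * Real.sin t : ℝ) := by
  rw [lamS_exp hr, expPhase, sinPhase_ofReal hr, mul_comm I (t : ℂ), Complex.exp_mul_I]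
  simp only [map_add, map_mul, Complex.conj_I, ← Complex.ofReal_cos, ← Complex.ofReal_sin,
    Complex.conj_ofReal]
  push_cast
  ring

theorem sinPhaseReal_add_mul_sinPhaseReal_sub {r : ℝ} (hr : r ^ 2 < 1) (t : ℝ) :
    (sinPhaseReal r t + r * Real.sin t) * (sinPhaseReal r t - r * Real.sin t) = 1 - r ^ 2 := by
  linear_combination sq_sinPhaseReal hr t - r ^ 2 * Real.sin_sq_add_cos_sq t

theorem sinPhaseReal_add_pos {r : ℝ} (hr : r ^ 2 < 1) (t : ℝ) :
    0 < sinPhaseReal r t + r * Real.sin t := by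
  have hlt : (r * Real.sin t) ^ 2 < sinPhaseReal r t ^ 2 := by
    linarith [sinPhaseReal_add_mul_sinPhaseReal_sub hr t]
  linarith [(abs_lt.1 (abs_lt_of_sq_lt_sq hlt (sinPhaseReal_pos hr t).le)).1]

theorem sq_pnormF_exp (hr : ‖a‖ ^ 2 < 1) (t : ℝ) :
    pnormF a b (Complex.exp (I * t)) ^ 2 =
      ‖b‖ ^ 2 + (sinPhaseReal ‖a‖ t + ‖a‖ * Real.sin t) ^ 2 := by
  rw [pnormF, Real.sq_sqrt (by positivity), lamS_exp_sub hr, norm_mul, Complex.norm_I, one_mul,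
    Complex.norm_real, Real.norm_eq_abs, sq_abs]

theorem uvec_exp (hr : ‖a‖ ^ 2 < 1) (t : ℝ) :
    uvec a b (Complex.exp (I * t)) = (pnormF a b (Complex.exp (I * t)) : ℂ)⁻¹ •
      (a / ‖a‖ * b * Complex.exp (I * t),
        I * (sinPhaseReal ‖a‖ t + ‖a‖ * Real.sin t : ℝ)) := by
  rw [uvec, lamS_exp_sub hr, Prod.smul_mk, smul_eq_mul, smul_eq_mul, mul_div_right_comm]

theorem norm_div_norm_mul (ha : a ≠ 0) (b : ℂ) : ‖a / ‖a‖ * b‖ = ‖b‖ := by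
  rw [norm_mul, norm_div, Complex.norm_real, norm_norm, div_self (norm_ne_zero_iff.2 ha), one_mul]

theorem nsq_uvec_exp (ha : a ≠ 0) (hr : ‖a‖ ^ 2 < 1) (t : ℝ) :
    nsq (uvec a b (Complex.exp (I * t))) = 1 := by
  have hX := sinPhaseReal_add_pos hr t
  have hp : 0 < pnormF a b (Complex.exp (I * t)) ^ 2 := by
    rw [sq_pnormF_exp hr]; positivity
  rw [uvec_exp hr, nsq]
  have hfst : ‖a / ‖a‖ * b * Complex.exp (I * t)‖ = ‖b‖ := by
    rw [norm_mul, norm_div_norm_mul ha, mul_comm I (t : ℂ), Complex.norm_exp_ofReal_mul_I, mul_one]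
  have hsnd : ‖I * ((sinPhaseReal ‖a‖ t + ‖a‖ * Real.sin t : ℝ) : ℂ)‖ =
      sinPhaseReal ‖a‖ t + ‖a‖ * Real.sin t := by
    rw [norm_mul, Complex.norm_I, one_mul, Complex.norm_real, Real.norm_of_nonneg hX.le]
  rw [Prod.smul_fst, Prod.smul_snd, norm_smul, norm_smul, hfst, hsnd, norm_inv,
    Complex.norm_real, mul_pow, mul_pow, ← mul_add, inv_pow, Real.norm_eq_abs, sq_abs,
    ← sq_pnormF_exp hr, inv_mul_cancel₀ hp.ne']

theorem symbol_uvec_exp (hab : ‖a‖ ^ 2 + ‖b‖ ^ 2 = 1) (ha : a ≠ 0) (hr : ‖a‖ ^ 2 < 1) (t : ℝ) :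
    symbol ‖a‖ (a / ‖a‖ * b) t (uvec a b (Complex.exp (I * t))) =
      expPhase ‖a‖ t • uvec a b (Complex.exp (I * t)) := by
  have hββ : a / ‖a‖ * b * conj (a / ‖a‖ * b) = 1 - (‖a‖ : ℂ) ^ 2 := by
    rw [Complex.mul_conj, Complex.normSq_eq_norm_sq, norm_div_norm_mul ha]
    exact_mod_cast eq_sub_of_add_eq' hab
  have hX : ((sinPhaseReal ‖a‖ t + ‖a‖ * Real.sin t : ℝ) : ℂ) *
      (sinPhaseReal ‖a‖ t - ‖a‖ * Real.sin t : ℝ) = 1 - (‖a‖ : ℂ) ^ 2 := by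
    exact_mod_cast sinPhaseReal_add_mul_sinPhaseReal_sub hr t
  have hexp : Complex.exp (-(I * t)) * Complex.exp (I * t) = 1 := by
    rw [← Complex.exp_add, neg_add_cancel, Complex.exp_zero]
  have hpos : Complex.exp (I * t) = Complex.cos t + I * Complex.sin t := by
    rw [mul_comm I (t : ℂ), Complex.exp_mul_I, mul_comm]
  have hneg : Complex.exp (-(I * t)) = Complex.cos t - I * Complex.sin t := by
    rw [mul_comm I (t : ℂ), ← neg_mul, Complex.exp_mul_I, Complex.cos_neg, Complex.sin_neg]; ring
  rw [uvec_exp hr, map_smul, smul_comm, symbol_apply, expPhase, sinPhase_ofReal hr]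
  congr 1
  push_cast at hX ⊢
  ext <;> simp only [Prod.smul_fst, Prod.smul_snd, smul_eq_mul]
  · rw [hneg, hpos]
    ring
  · linear_combination (-(a / ‖a‖ * b * conj (a / ‖a‖ * b))) * hexp - hββ +
      ‖a‖ * I * (sinPhaseReal ‖a‖ t + ‖a‖ * Complex.sin t) * hpos -
      (sinPhaseReal ‖a‖ t + ‖a‖ * Complex.sin t) *
        (sinPhaseReal ‖a‖ t - ‖a‖ * Complex.sin t) * Complex.I_sq + hX

theorem fpsi_exp (hab : ‖a‖ ^ 2 + ‖b‖ ^ 2 = 1) (ha : a ≠ 0) (hr : ‖a‖ ^ 2 < 1) (φ ψ : ℂ × ℂ)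
    (t : ℝ) : fpsi a b φ ψ (Complex.exp (I * t)) = amplitude ‖a‖ (a / ‖a‖ * b) φ ψ t := by
  rw [amplitude, spectralProjection_apply_of_eigenvector hr (nsq_uvec_exp ha hr t)
    (symbol_uvec_exp hab ha hr t), map_smul, innCLeft_apply, smul_eq_mul, fpsi]

theorem fpsi_add_gpsi {z : ℂ} (hz : nsq (uvec a b z) = 1) (φ ψ : ℂ × ℂ) :
    fpsi a b φ ψ z + gpsi a b φ ψ z = innC φ ψ := by
  conv_rhs => rw [← innCLeft_apply, eq_innC_smul_add_innC_Jmap_smul hz φ, map_add, map_smul,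
    map_smul, innCLeft_apply, innCLeft_apply, smul_eq_mul, smul_eq_mul]
  rfl

theorem gpsi_exp (hab : ‖a‖ ^ 2 + ‖b‖ ^ 2 = 1) (ha : a ≠ 0) (hr : ‖a‖ ^ 2 < 1) (φ ψ : ℂ × ℂ)
    (t : ℝ) : gpsi a b φ ψ (Complex.exp (-(I * t))) =
      amplitude ‖a‖ (a / ‖a‖ * b) φ ψ (π - t : ℝ) := by
  have hexp : Complex.exp (-(I * t)) = Complex.exp (I * (-t : ℝ)) := by
    rw [Complex.ofReal_neg, mul_neg]
  have hshift : ((π - t : ℝ) : ℂ) = (-t : ℝ) + π := by push_cast; ring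
  rw [hexp, hshift, amplitude_add_pi (sinPhase_ne_zero (ofReal_mem_phaseDomain hr _)),
    ← fpsi_exp hab ha hr, ← fpsi_add_gpsi (nsq_uvec_exp ha hr _) φ ψ, add_sub_cancel_left]

end Eigenvector

/-! ### The stationary points -/

section StationaryPoint

variable {a b : ℂ} {ξ : ℝ}

theorem one_sub_sq_pos (hab : ‖a‖ ^ 2 + ‖b‖ ^ 2 = 1) (hξ : ξ ^ 2 < ‖a‖ ^ 2) : 0 < 1 - ξ ^ 2 := by
  linarith [sq_nonneg ‖b‖]

theorem norm_pos_of_sq_lt (hξ : ξ ^ 2 < ‖a‖ ^ 2) : 0 < ‖a‖ := by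
  simpa only [abs_norm] using (abs_nonneg ξ).trans_lt (sq_lt_sq.1 hξ)

theorem sq_add_sq_stationary (hab : ‖a‖ ^ 2 + ‖b‖ ^ 2 = 1) (hξ : ξ ^ 2 < ‖a‖ ^ 2) :
    (‖b‖ * ξ / (‖a‖ * √(1 - ξ ^ 2))) ^ 2 +
      (√(‖a‖ ^ 2 - ξ ^ 2) / (‖a‖ * √(1 - ξ ^ 2))) ^ 2 = 1 := by
  have ha : ‖a‖ ^ 2 ≠ 0 := (pow_pos (norm_pos_of_sq_lt hξ) 2).ne'
  have hq : 0 < 1 - ξ ^ 2 := one_sub_sq_pos hab hξ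
  rw [div_pow, div_pow, ← add_div, mul_pow, mul_pow, Real.sq_sqrt hq.le,
    Real.sq_sqrt (sub_pos.2 hξ).le, div_eq_one_iff_eq (mul_ne_zero ha hq.ne')]
  linear_combination ξ ^ 2 * hab

theorem sin_tF (hab : ‖a‖ ^ 2 + ‖b‖ ^ 2 = 1) (hξ : ξ ^ 2 < ‖a‖ ^ 2) :
    Real.sin (tF a b ξ) = ‖b‖ * ξ / (‖a‖ * √(1 - ξ ^ 2)) := by
  have hle : (‖b‖ * ξ / (‖a‖ * √(1 - ξ ^ 2))) ^ 2 ≤ 1 :=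
    (le_add_of_nonneg_right (sq_nonneg _)).trans_eq (sq_add_sq_stationary hab hξ)
  have habs := abs_le.1 ((sq_le_one_iff_abs_le_one _).1 hle)
  rw [tF, Real.sin_arcsin habs.1 habs.2]

theorem cos_tF (hab : ‖a‖ ^ 2 + ‖b‖ ^ 2 = 1) (hξ : ξ ^ 2 < ‖a‖ ^ 2) :
    Real.cos (tF a b ξ) = √(‖a‖ ^ 2 - ξ ^ 2) / (‖a‖ * √(1 - ξ ^ 2)) := by
  rw [tF, Real.cos_arcsin, ← eq_sub_of_add_eq' (sq_add_sq_stationary hab hξ),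
    Real.sqrt_sq (by positivity)]

theorem sinPhaseReal_tF (hab : ‖a‖ ^ 2 + ‖b‖ ^ 2 = 1) (hξ : ξ ^ 2 < ‖a‖ ^ 2) :
    sinPhaseReal ‖a‖ (tF a b ξ) = ‖b‖ / √(1 - ξ ^ 2) := by
  have ha := (norm_pos_of_sq_lt hξ).ne'
  have hq := one_sub_sq_pos hab hξ
  have hcos : (‖a‖ * Real.cos (tF a b ξ)) ^ 2 = (‖a‖ ^ 2 - ξ ^ 2) / (1 - ξ ^ 2) := by
    rw [cos_tF hab hξ, ← div_div, mul_div_assoc', mul_div_cancel₀ _ ha, div_pow,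
      Real.sq_sqrt hq.le, Real.sq_sqrt (sub_pos.2 hξ).le]
  rw [sinPhaseReal, hcos, one_sub_div hq.ne', sub_sub_sub_cancel_right, ← eq_sub_of_add_eq' hab,
    Real.sqrt_div (sq_nonneg _), Real.sqrt_sq (norm_nonneg b)]

theorem groupVelocityReal_tF (hab : ‖a‖ ^ 2 + ‖b‖ ^ 2 = 1) (hb : b ≠ 0) (hξ : ξ ^ 2 < ‖a‖ ^ 2) :
    groupVelocityReal ‖a‖ (tF a b ξ) = ξ := by
  have ha := (norm_pos_of_sq_lt hξ).ne'
  have : 0 < ‖b‖ := norm_pos_iff.2 hb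
  have hq := Real.sqrt_pos.2 (one_sub_sq_pos hab hξ)
  rw [groupVelocityReal, sin_tF hab hξ, sinPhaseReal_tF hab hξ]
  field_simp

theorem phaseCurvature_tF (hab : ‖a‖ ^ 2 + ‖b‖ ^ 2 = 1) (hb : b ≠ 0) (hξ : ξ ^ 2 < ‖a‖ ^ 2) :
    phaseCurvature ‖a‖ (tF a b ξ) = (1 - ξ ^ 2) * √(‖a‖ ^ 2 - ξ ^ 2) / ‖b‖ := by
  have ha := (norm_pos_of_sq_lt hξ).ne'
  have : 0 < ‖b‖ := norm_pos_iff.2 hb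
  have hq := one_sub_sq_pos hab hξ
  have : 0 < √(1 - ξ ^ 2) := Real.sqrt_pos.2 hq
  rw [phaseCurvature, cos_tF hab hξ, sinPhaseReal_tF hab hξ, ← eq_sub_of_add_eq' hab]
  nth_rewrite 3 [← Real.sq_sqrt hq.le]
  field_simp

theorem sqrt_le_cos_tF {α : ℝ} (hab : ‖a‖ ^ 2 + ‖b‖ ^ 2 = 1) (hα : α < ‖a‖) (hξ : |ξ| ≤ α) :
    √(‖a‖ ^ 2 - α ^ 2) ≤ Real.cos (tF a b ξ) := by
  have hξα : ξ ^ 2 ≤ α ^ 2 := sq_le_sq' (abs_le.1 hξ).1 (abs_le.1 hξ).2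
  have hξa : ξ ^ 2 < ‖a‖ ^ 2 := sq_lt_sq.2 (by rw [abs_norm]; exact hξ.trans_lt hα)
  have hq := one_sub_sq_pos hab hξa
  have hden : ‖a‖ * √(1 - ξ ^ 2) ≤ 1 := by
    rw [← sq_le_one_iff₀ (by positivity), mul_pow, Real.sq_sqrt hq.le]
    nlinarith [sq_nonneg ‖b‖, sq_nonneg ξ]
  rw [cos_tF hab hξa]
  exact (Real.sqrt_le_sqrt (by linarith)).trans
    (le_div_self (Real.sqrt_nonneg _) (mul_pos (norm_pos_of_sq_lt hξa) (Real.sqrt_pos.2 hq)) hden)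

theorem expPhase_ofReal_eq_exp (ha : ‖a‖ ^ 2 < 1) (t : ℝ) :
    expPhase ‖a‖ t = Complex.exp (I * muF a t) := by
  have habs := abs_lt.1 ((sq_lt_one_iff_abs_lt_one _).1 (sq_mul_cos_lt_one ha t))
  rw [mul_comm, Complex.exp_mul_I, ← Complex.ofReal_cos, ← Complex.ofReal_sin, muF,
    Real.cos_arccos habs.1.le habs.2.le, Real.sin_arccos, expPhase, sinPhase_ofReal ha,
    sinPhaseReal, mul_comm I]
  push_cast
  rfl

theorem expNegPhase_ofReal_eq_exp (ha : ‖a‖ ^ 2 < 1) (t : ℝ) :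
    expNegPhase ‖a‖ t = Complex.exp (-(I * muF a t)) := by
  rw [← conj_expPhase_ofReal ha, expPhase_ofReal_eq_exp ha, ← Complex.exp_conj, map_mul,
    Complex.conj_I, Complex.conj_ofReal, neg_mul]

theorem walkIntegrand_ofReal (ha : ‖a‖ ^ 2 < 1) (H : ℂ → ℂ) {n : ℕ} {y : ℤ} (hy : (y : ℝ) = n * ξ)
    (t : ℝ) :
    walkIntegrand ‖a‖ H n y t = Complex.exp (I * (n * (muF a t - ξ * t) : ℝ)) * H t := by
  have hy' : (y : ℂ) = n * ξ := by exact_mod_cast hy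
  rw [walkIntegrand, expPhase_ofReal_eq_exp ha, ← Complex.exp_nat_mul, ← Complex.exp_add, hy']
  congr 2
  push_cast
  ring

theorem walkIntegrand_pi_sub_ofReal (ha : ‖a‖ ^ 2 < 1) (H : ℂ → ℂ) {n : ℕ} {y : ℤ}
    (hy : (y : ℝ) = n * ξ) (t : ℝ) :
    walkIntegrand ‖a‖ H n y (π - t : ℝ) = (-1) ^ ((n : ℤ) + y) *
      (Complex.exp (-(I * (n * (muF a t - ξ * t) : ℝ))) * H (π - t : ℝ)) := by
  have hy' : (y : ℂ) = n * ξ := by exact_mod_cast hy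
  have hmu : muF a (-t) = muF a t := by rw [muF, Real.cos_neg, muF]
  have hshift : ((π - t : ℝ) : ℂ) = (-t : ℝ) + π := by push_cast; ring
  rw [hshift, walkIntegrand_add_pi, expNegPhase_ofReal_eq_exp ha, hmu, ← Complex.exp_nat_mul,
    ← Complex.exp_add, hy']
  congr 3
  push_cast
  ring

end StationaryPoint

section Asymptotics

variable {a b : ℂ} {ξ : ℝ}

/-- The factor of order `n^{-1/2}` in front of the asymptotic expansion. -/
def stationaryPrefactor (a b : ℂ) (n : ℕ) (ξ : ℝ) : ℝ :=
  √(‖b‖ / (2 * π * n * (1 - ξ ^ 2) * √(‖a‖ ^ 2 - ξ ^ 2)))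

/-- The sum of the contributions of the two stationary points. -/
def stationaryTerm (a b : ℂ) (φ ψ : ℂ × ℂ) (n : ℕ) (ξ : ℝ) : ℂ :=
  Complex.exp (I * (n * (muF a (tF a b ξ) - ξ * tF a b ξ) : ℝ) + π * I / 4) *
      fpsi a b φ ψ (Complex.exp (I * tF a b ξ)) +
    Complex.exp (-(I * (n * (muF a (tF a b ξ) - ξ * tF a b ξ) : ℝ)) - π * I / 4) *
      gpsi a b φ ψ (Complex.exp (-(I * tF a b ξ)))

theorem sqrt_pi_div_phaseCurvature_tF (hab : ‖a‖ ^ 2 + ‖b‖ ^ 2 = 1) (hb : b ≠ 0)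
    (hξ : ξ ^ 2 < ‖a‖ ^ 2) (n : ℕ) :
    √(π / (n * phaseCurvature ‖a‖ (tF a b ξ))) = √2 * π * stationaryPrefactor a b n ξ := by
  have : 0 < ‖b‖ := norm_pos_iff.2 hb
  nth_rewrite 2 [← Real.sqrt_sq Real.pi_pos.le]
  rw [phaseCurvature_tF hab hb hξ, stationaryPrefactor, ← Real.sqrt_mul zero_le_two,
    ← Real.sqrt_mul (by positivity)]
  congr 1
  field_simp

theorem stationaryPrefactor_pos (hab : ‖a‖ ^ 2 + ‖b‖ ^ 2 = 1) (hb : b ≠ 0)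
    (hξ : ξ ^ 2 < ‖a‖ ^ 2) {n : ℕ} (hn : n ≠ 0) : 0 < stationaryPrefactor a b n ξ := by
  have : 0 < ‖b‖ := norm_pos_iff.2 hb
  have hq := one_sub_sq_pos hab hξ
  have : 0 < √(‖a‖ ^ 2 - ξ ^ 2) := Real.sqrt_pos.2 (sub_pos.2 hξ)
  rw [stationaryPrefactor]
  positivity

theorem one_le_stationaryPrefactor_mul (hab : ‖a‖ ^ 2 + ‖b‖ ^ 2 = 1) (hb : b ≠ 0)
    (hξ : ξ ^ 2 < ‖a‖ ^ 2) {n : ℕ} (hn : n ≠ 0) :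
    1 ≤ stationaryPrefactor a b n ξ * (√n * √(2 * π / ‖b‖)) := by
  have : 0 < ‖b‖ := norm_pos_iff.2 hb
  have hq := one_sub_sq_pos hab hξ
  have hd := Real.sqrt_pos.2 (sub_pos.2 hξ)
  have hd1 : √(‖a‖ ^ 2 - ξ ^ 2) ≤ 1 :=
    Real.sqrt_le_one.2 (by linarith [sq_nonneg ξ, sq_nonneg ‖b‖])
  have hprod : (1 - ξ ^ 2) * √(‖a‖ ^ 2 - ξ ^ 2) ≤ 1 :=
    mul_le_one₀ (sub_le_self 1 (sq_nonneg ξ)) hd.le hd1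
  have hcancel : ‖b‖ / (2 * π * n * (1 - ξ ^ 2) * √(‖a‖ ^ 2 - ξ ^ 2)) * (n * (2 * π / ‖b‖)) =
      ((1 - ξ ^ 2) * √(‖a‖ ^ 2 - ξ ^ 2))⁻¹ := by
    field_simp
  rw [stationaryPrefactor, ← Real.sqrt_mul n.cast_nonneg, ← Real.sqrt_mul (by positivity), hcancel,
    Real.one_le_sqrt]
  exact (one_le_inv₀ (mul_pos hq hd)).2 hprod

theorem sqrt_two_mul_exp_pi_mul_I_div_four : √2 * Complex.exp (π * I / 4) = 1 + I := by
  have harg : π * I / 4 = (π / 4 : ℝ) * I := by push_cast; ring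
  have hsq : ((√2 : ℝ) : ℂ) ^ 2 = 2 := by exact_mod_cast Real.sq_sqrt zero_le_two
  rw [harg, Complex.exp_mul_I, ← Complex.ofReal_cos, ← Complex.ofReal_sin, Real.cos_pi_div_four,
    Real.sin_pi_div_four]
  push_cast
  linear_combination (1 + I) / 2 * hsq

theorem sqrt_two_mul_exp_neg_pi_mul_I_div_four : √2 * Complex.exp (-(π * I / 4)) = 1 - I := by
  have hconj := congrArg conj sqrt_two_mul_exp_pi_mul_I_div_four
  rw [map_mul, ← Complex.exp_conj] at hconj
  simpa [neg_div, map_ofNat, ← sub_eq_add_neg] using hconj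

theorem sqrt_two_mul_eq_two_mul_stationaryTerm (a b : ℂ) (φ ψ : ℂ × ℂ) (n : ℕ) (ξ : ℝ) :
    √2 * ((1 + I) * (Complex.exp (I * (n * (muF a (tF a b ξ) - ξ * tF a b ξ) : ℝ)) *
        fpsi a b φ ψ (Complex.exp (I * tF a b ξ))) +
      (1 - I) * (Complex.exp (-(I * (n * (muF a (tF a b ξ) - ξ * tF a b ξ) : ℝ))) *
        gpsi a b φ ψ (Complex.exp (-(I * tF a b ξ))))) = 2 * stationaryTerm a b φ ψ n ξ := by
  have hsq : ((√2 : ℝ) : ℂ) ^ 2 = 2 := by exact_mod_cast Real.sq_sqrt zero_le_two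
  rw [stationaryTerm, Complex.exp_add, sub_eq_add_neg _ (π * I / 4), Complex.exp_add,
    ← sqrt_two_mul_exp_pi_mul_I_div_four, ← sqrt_two_mul_exp_neg_pi_mul_I_div_four, ← hsq]
  ring

theorem exists_norm_le_and_eq_mul_add {J M : ℂ} {C K P x : ℝ} (hx : 0 < x) (hP : 0 < P)
    (hK : 1 ≤ P * (√x * K)) (hJ : ‖J - (2 * π * P : ℝ) * M‖ ≤ C / (x * √x)) :
    ∃ E : ℂ, ‖E‖ ≤ C * K / (2 * π) / x ∧ (2 * (π : ℂ))⁻¹ * J = P * (M + E) := by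
  have hP' : (P : ℂ) ≠ 0 := by exact_mod_cast hP.ne'
  have hπ : (π : ℂ) ≠ 0 := by exact_mod_cast Real.pi_ne_zero
  refine ⟨(J - (2 * π * P : ℝ) * M) / (2 * π * P : ℝ), ?_, by push_cast; field_simp; ring⟩
  rw [norm_div, Complex.norm_real, Real.norm_of_nonneg (by positivity), div_le_iff₀ (by positivity)]
  calc ‖J - (2 * π * P : ℝ) * M‖ ≤ C / (x * √x) := hJ
    _ ≤ C / (x * √x) * (P * (√x * K)) := le_mul_of_one_le_right ((norm_nonneg _).trans hJ) hK
    _ = C * K / (2 * π) / x * (2 * π * P) := by field_simp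

theorem exists_norm_integral_sub_stationaryTerm_le {α : ℝ} (hab : ‖a‖ ^ 2 + ‖b‖ ^ 2 = 1)
    (hb : b ≠ 0) (hα0 : 0 ≤ α) (hα : α < ‖a‖) (φ ψ : ℂ × ℂ) :
    ∃ C > 0, ∀ (n : ℕ) (y : ℤ) (ξ : ℝ), n ≠ 0 → Even ((n : ℤ) + y) → ξ = y / n → |ξ| ≤ α →
      ‖(∫ t in (-π)..π, walkIntegrand ‖a‖ (amplitude ‖a‖ (a / ‖a‖ * b) φ ψ) n y t) -
        (2 * π * stationaryPrefactor a b n ξ : ℝ) * stationaryTerm a b φ ψ n ξ‖ ≤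
          C / (n * √n) := by
  have ha : a ≠ 0 := norm_pos_iff.1 (hα0.trans_lt hα)
  have hr : ‖a‖ ^ 2 < 1 := by linarith [pow_pos (norm_pos_iff.2 hb) 2]
  have hc : 0 < √(‖a‖ ^ 2 - α ^ 2) :=
    Real.sqrt_pos.2 (sub_pos.2 (pow_lt_pow_left₀ hα hα0 two_ne_zero))
  obtain ⟨C, hC⟩ := exists_norm_integral_walkIntegrand_sub_le (norm_pos_iff.2 ha) hr
    (differentiableOn_amplitude ‖a‖ (a / ‖a‖ * b) φ ψ) (amplitude_periodic _ _ φ ψ) hc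
  refine ⟨|C| + 1, by positivity, fun n y ξ hn hpar hξy hξ => ?_⟩
  have hξa : ξ ^ 2 < ‖a‖ ^ 2 := sq_lt_sq.2 (by rw [abs_norm]; exact hξ.trans_lt hα)
  have hy : (y : ℝ) = n * ξ := by rw [hξy]; field_simp
  have hsaddle := hC n y (tF a b ξ) hn
    (abs_le.2 ⟨Real.neg_pi_div_two_le_arcsin _, Real.arcsin_le_pi_div_two _⟩)
    (sqrt_le_cos_tF hab hα hξ) ((groupVelocityReal_tF hab hb hξa).trans hξy)
  rw [walkIntegrand_ofReal hr _ hy, walkIntegrand_pi_sub_ofReal hr _ hy, hpar.neg_one_zpow,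
    one_mul, sqrt_pi_div_phaseCurvature_tF hab hb hξa, ← fpsi_exp hab ha hr,
    ← gpsi_exp hab ha hr] at hsaddle
  have hterm := sqrt_two_mul_eq_two_mul_stationaryTerm a b φ ψ n ξ
  refine (le_of_eq ?_).trans (hsaddle.trans (by gcongr; linarith [le_abs_self C]))
  congr 2
  push_cast at hterm ⊢
  linear_combination (-(π * stationaryPrefactor a b n ξ : ℂ)) * hterm

theorem innC_qwStep_iterate_eq (hab : ‖a‖ ^ 2 + ‖b‖ ^ 2 = 1) (ha : a ≠ 0) (hr : ‖a‖ ^ 2 < 1)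
    (φ ψ : ℂ × ℂ) (n : ℕ) (y : ℤ) :
    innC ((qwStep a b)^[n] (qwDelta φ) y) ψ =
      (1 + (-1) ^ ((n : ℤ) + y)) * (a / ‖a‖) ^ (-y) * ((2 * (π : ℂ))⁻¹ *
        ∫ t in (-π)..π, walkIntegrand ‖a‖ (amplitude ‖a‖ (a / ‖a‖ * b) φ ψ) n y t) := by
  have ha' : (‖a‖ : ℂ) ≠ 0 := by exact_mod_cast norm_ne_zero_iff.2 ha
  have hω : conj (a / ‖a‖) * (a / ‖a‖) = 1 := by
    rw [Complex.conj_mul', norm_div, Complex.norm_real, norm_norm,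
      div_self (norm_ne_zero_iff.2 ha), Complex.ofReal_one, one_pow]
  have hgauge := qwStep_iterate_mul_left (a := ‖a‖) (b := b) hω φ n y
  have hβ : ‖a / ‖a‖ * b‖ ^ 2 = 1 - ‖a‖ ^ 2 := by
    rw [norm_div_norm_mul ha, ← eq_sub_of_add_eq' hab]
  rw [mul_div_cancel₀ _ ha'] at hgauge
  rw [hgauge, ← innCLeft_apply, map_smul, innCLeft_apply, innC_qwStep_iterate hr hβ, smul_eq_mul]
  ring

end Asymptotics

end

/-- Proposition `amp1`: stationary-phase asymptotics of the transition
amplitude in the allowed region, uniformly over `|y/n| ≤ α < |a|`. -/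
theorem stmt8 (a b : ℂ) (hab1 : ‖a‖ ^ 2 + ‖b‖ ^ 2 = 1) (hab : a * b ≠ 0)
    (φ : ℂ × ℂ) (hφ : nsq φ = 1) (α : ℝ) (hα0 : 0 < α) (hαa : α < ‖a‖)
    (ψ : ℂ × ℂ) (hψ : nsq ψ = 1) :
    ∃ C : ℝ, 0 < C ∧
      ∀ n : ℕ, 0 < n → ∀ y : ℤ, ∀ ξ : ℝ, ξ = (y : ℝ) / (n : ℝ) → |ξ| ≤ α →
        ∃ E : ℂ, ‖E‖ ≤ C / (n : ℝ) ∧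
          innC (((qwStep a b)^[n] (qwDelta φ)) y) ψ =
            (1 + (-1 : ℂ) ^ ((n : ℤ) + y)) * (a / (‖a‖ : ℂ)) ^ (-y) *
              ((Real.sqrt (‖b‖ /
                  (2 * Real.pi * (n : ℝ) * (1 - ξ ^ 2) * Real.sqrt (‖a‖ ^ 2 - ξ ^ 2))) : ℝ) : ℂ) *
              (Complex.exp (Complex.I * (((n : ℝ) * (muF a (tF a b ξ) - ξ * tF a b ξ) : ℝ) : ℂ)
                    + (Real.pi : ℂ) * Complex.I / 4) *
                  fpsi a b φ ψ (Complex.exp (Complex.I * ((tF a b ξ : ℝ) : ℂ)))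
                + Complex.exp (-(Complex.I * (((n : ℝ) * (muF a (tF a b ξ) - ξ * tF a b ξ) : ℝ) : ℂ))
                    - (Real.pi : ℂ) * Complex.I / 4) *
                  gpsi a b φ ψ (Complex.exp (-(Complex.I * ((tF a b ξ : ℝ) : ℂ))))
                + E) := by
  have ha : a ≠ 0 := left_ne_zero_of_mul hab
  have hb : b ≠ 0 := right_ne_zero_of_mul hab
  have hb0 : 0 < ‖b‖ := norm_pos_iff.2 hb
  have hr : ‖a‖ ^ 2 < 1 := by linarith [pow_pos hb0 2]
  obtain ⟨C, hC0, hC⟩ := exists_norm_integral_sub_stationaryTerm_le hab1 hb hα0.le hαa φ ψ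
  refine ⟨C * √(2 * Real.pi / ‖b‖) / (2 * Real.pi), by positivity, fun n hn y ξ hξy hξ => ?_⟩
  rw [innC_qwStep_iterate_eq hab1 ha hr]
  rcases Int.even_or_odd ((n : ℤ) + y) with heven | hodd
  · have hξa : ξ ^ 2 < ‖a‖ ^ 2 := sq_lt_sq.2 (by rw [abs_norm]; exact hξ.trans_lt hαa)
    obtain ⟨E, hE, hexpansion⟩ := exists_norm_le_and_eq_mul_add (Nat.cast_pos.2 hn)
      (stationaryPrefactor_pos hab1 hb hξa hn.ne')
      (one_le_stationaryPrefactor_mul hab1 hb hξa hn.ne') (hC n y ξ hn.ne' heven hξy hξ)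
    refine ⟨E, hE, ?_⟩
    rw [hexpansion, ← mul_assoc]
    rfl
  · exact ⟨0, by rw [norm_zero]; positivity, by rw [hodd.neg_one_zpow]; ring⟩
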